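/- arXiv:1009.5184 — 2 statements merged into one kernel-verified Lean document; each statement's English description precedes it below -/
import Mathlib

section
/- Assume (H1)–(H3), fix λ, μ with 0 < λ < Re λ* < ν < μ < (1+α)λ (α = min{1, r₁-2, r₂-2}), and set h_j(v) = J[f_j(φ+v) - f_j(φ) - Df_j(φ)v]. Then for j = 1,2 there exists a constant C independent of v and T such that ‖h_j(v)‖_{L^{q_j',μ}_T L^{r_j'}} ≤ C( ‖v‖_{X_T}² + ‖v‖_{X_T}^{r_j-1} ). -/
open MeasureTheory ENNReal

noncomputable section

/-- Euclidean space ℝ^N. -/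
abbrev Rn (N : ℕ) := EuclideanSpace ℝ (Fin N)

variable {N : ℕ}

section BasicDefs

variable {G : Type} [NormedAddCommGroup G] [NormedSpace ℝ G]

/-- Pointwise Laplacian, defined via the second iterated Fréchet derivative. -/
def lap (f : Rn N → G) (x : Rn N) : G :=
  ∑ i : Fin N,
    iteratedFDeriv ℝ 2 f x ![EuclideanSpace.single i 1, EuclideanSpace.single i 1]

/-- Sobolev H^k norm (sum of L² norms of iterated derivatives up to order k). -/
def sobNorm (k : ℕ) (f : Rn N → G) : ℝ≥0∞ :=
  ∑ i ∈ Finset.range (k + 1), eLpNorm (iteratedFDeriv ℝ i f) 2 volume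

/-- (Strong) membership in the Sobolev space H^k. -/
def MemSobolev (k : ℕ) (f : Rn N → G) : Prop :=
  ContDiff ℝ (k : ℕ∞) f ∧ ∀ i ≤ k, MemLp (iteratedFDeriv ℝ i f) 2 volume

/-- L^q norm in time on (0,T) of an ℝ≥0∞-valued function. -/
def timeLp (q : ℝ≥0∞) (T : ℝ) (Φ : ℝ → ℝ≥0∞) : ℝ≥0∞ :=
  if q = ∞ then essSup Φ (volume.restrict (Set.Ioo 0 T))
  else (∫⁻ t in Set.Ioo 0 T, Φ t ^ q.toReal) ^ (1 / q.toReal)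

/-- ‖e^{-λ·}f‖_{L^q((0,T),L^r)}. -/
def twNorm (q r : ℝ≥0∞) (lam T : ℝ) (f : ℝ → Rn N → G) : ℝ≥0∞ :=
  timeLp q T (fun t => ENNReal.ofReal (Real.exp (-(lam * t))) * eLpNorm (f t) r volume)

/-- The weighted norm ‖f‖_{L^{q,λ}_T L^r} = e^{λT}‖e^{-λ·}f‖_{L^q((0,T),L^r)}. -/
def wNorm (q r : ℝ≥0∞) (lam T : ℝ) (f : ℝ → Rn N → G) : ℝ≥0∞ :=
  ENNReal.ofReal (Real.exp (lam * T)) * twNorm q r lam T f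

/-- The weighted norm ‖f‖_{L^{∞,λ}_T H²}. -/
def wNormH2 (lam T : ℝ) (f : ℝ → Rn N → G) : ℝ≥0∞ :=
  ENNReal.ofReal (Real.exp (lam * T)) *
    essSup (fun t => ENNReal.ofReal (Real.exp (-(lam * t))) * sobNorm 2 (f t))
      (volume.restrict (Set.Ioo 0 T))

/-- Pointwise time derivative of a time-dependent function. -/
def tderiv (v : ℝ → Rn N → G) : ℝ → Rn N → G :=
  fun t x => deriv (fun s => v s x) t

/-- The norm ‖v‖_{X_T} = ‖v‖_{L^{∞,λ}_T H²} + ‖∂ₜv‖_{L^{q₁,λ}_T L^{r₁}} + ‖∂ₜv‖_{L^{q₂,λ}_T L^{r₂}}. -/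
def XNorm (q₁ r₁ q₂ r₂ : ℝ≥0∞) (lam T : ℝ) (v : ℝ → Rn N → G) : ℝ≥0∞ :=
  wNormH2 lam T v + wNorm q₁ r₁ lam T (tderiv v) + wNorm q₂ r₂ lam T (tderiv v)

end BasicDefs

/-- A pair (q,r) is admissible: 2/q = N(1/2-1/r), 2 ≤ r ≤ 2N/(N-2)
(2 ≤ r < ∞ if N = 2, 2 ≤ r ≤ ∞ if N = 1), (q,r) ≠ (2,∞). -/
def Admissible (N : ℕ) (q r : ℝ≥0∞) : Prop :=
  2 ≤ r ∧ 2 / q = (N : ℝ≥0∞) * (1 / 2 - 1 / r) ∧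
    (3 ≤ N → r ≤ 2 * (N : ℝ≥0∞) / ((N : ℝ≥0∞) - 2)) ∧
    (N = 2 → r ≠ ∞) ∧ ¬(q = 2 ∧ r = ∞)

/-- Subcriticality: 1 < p < 2* - 1 with 2* = 2N/(N-2) for N ≥ 3 and 2* = ∞ for N = 1,2. -/
def Subcrit (N : ℕ) (p : ℝ) : Prop :=
  1 < p ∧ (3 ≤ N → p < 2 * (N : ℝ) / ((N : ℝ) - 2) - 1)

/-- The nonlinearity f(z) = -g(|z|²)z, identifying ℝ² with ℂ. -/
def fpot (g : ℝ → ℝ) : ℂ → ℂ :=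
  fun z => -((g (Complex.normSq z) : ℝ) : ℂ) * z

/-- The Hölder-type bound on the derivative required in (H1). -/
def H1bound (p : ℝ) (f : ℂ → ℂ) : Prop :=
  ContDiff ℝ 1 f ∧ f 0 = 0 ∧ fderiv ℝ f 0 = 0 ∧
    ∃ C : ℝ,
      (p ≤ 2 → ∀ z₁ z₂ : ℂ,
        ‖fderiv ℝ f z₁ - fderiv ℝ f z₂‖ ≤ C * ‖z₁ - z₂‖ ^ (p - 1)) ∧
      (2 < p → ∀ z₁ z₂ : ℂ,
        ‖fderiv ℝ f z₁ - fderiv ℝ f z₂‖ ≤ C * (‖z₁‖ ^ (p - 2) + ‖z₂‖ ^ (p - 2)) * ‖z₁ - z₂‖)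

/-- Hypothesis (H1). -/
structure H1full (N : ℕ) (g : ℝ → ℝ) (f₁ f₂ : ℂ → ℂ) (p₁ p₂ : ℝ) : Prop where
  gcont : ContinuousOn g (Set.Ici 0)
  hsum : ∀ z, fpot g z = f₁ z + f₂ z
  sub1 : Subcrit N p₁
  sub2 : Subcrit N p₂
  bd1 : H1bound p₁ f₁
  bd2 : H1bound p₂ f₂

/-- Hypothesis (H2): ω > 0 and φ ∈ H¹ is a nontrivial solution of -Δφ + ωφ - g(|φ|²)φ = 0. -/
def H2hyp (ω : ℝ) (g : ℝ → ℝ) (φ : Rn N → ℂ) : Prop :=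
  0 < ω ∧ φ ≠ 0 ∧ MemSobolev 1 φ ∧
    ∀ x, -(lap φ x) + (ω : ℂ) * φ x - ((g (Complex.normSq (φ x)) : ℝ) : ℂ) * φ x = 0

/-- The linearized operator A = JH acting on ℝ²-valued functions, in the identification
ℝ² ≅ ℂ (so that J is multiplication by -i). -/
def Aop (g : ℝ → ℝ) (ω : ℝ) (φ : Rn N → ℂ) (u : Rn N → ℂ) : Rn N → ℂ :=
  fun x => -Complex.I * (-(lap u x) + (ω : ℂ) * u x + fderiv ℝ (fpot g) (φ x) (u x))

/-- Complexification of a real-linear map on ℝ² ≅ ℂ, acting on ℂ². -/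
def cext (T : ℂ →L[ℝ] ℂ) (w : ℂ × ℂ) : ℂ × ℂ :=
  (((T 1).re : ℂ) * w.1 + ((T Complex.I).re : ℂ) * w.2,
   ((T 1).im : ℂ) * w.1 + ((T Complex.I).im : ℂ) * w.2)

/-- The complexified linearized operator A = J(H₀ + Df(φ)) acting on ℂ²-valued functions. -/
def AopC (g : ℝ → ℝ) (ω : ℝ) (φ : Rn N → ℂ) (u : Rn N → ℂ × ℂ) : Rn N → ℂ × ℂ :=
  fun x =>
    (-(lap (fun y => (u y).2) x) + (ω : ℂ) * (u x).2 +
        (cext (fderiv ℝ (fpot g) (φ x)) (u x)).2,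
     -(-(lap (fun y => (u y).1) x) + (ω : ℂ) * (u x).1 +
        (cext (fderiv ℝ (fpot g) (φ x)) (u x)).1))

/-- z is an eigenvalue of the (complexified) linearized operator A. -/
def IsEigen (g : ℝ → ℝ) (ω : ℝ) (φ : Rn N → ℂ) (z : ℂ) : Prop :=
  ∃ χ : Rn N → ℂ × ℂ, χ ≠ 0 ∧ MemSobolev 2 χ ∧ ∀ x, AopC g ω φ χ x = z • χ x

/-- Hypothesis (H3): A has an eigenvalue with positive real part. -/
def H3hyp (g : ℝ → ℝ) (ω : ℝ) (φ : Rn N → ℂ) : Prop :=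
  ∃ z : ℂ, 0 < z.re ∧ IsEigen g ω φ z

/-- u is a (global H¹) solution of i∂ₜu + Δu + g(|u|²)u = 0. -/
def IsNLS (g : ℝ → ℝ) (u : ℝ → Rn N → ℂ) : Prop :=
  (∀ t, MemSobolev 1 (u t)) ∧
    ∀ t x, HasDerivAt (fun s => u s x)
      (Complex.I * (lap (u t) x + ((g (Complex.normSq (u t x)) : ℝ) : ℂ) * u t x)) t

/-- Orbital stability of the standing wave e^{iωt}φ. -/
def OrbStable (g : ℝ → ℝ) (ω : ℝ) (φ : Rn N → ℂ) : Prop :=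
  ∀ ε : ℝ, 0 < ε → ∃ δ : ℝ, 0 < δ ∧
    ∀ u : ℝ → Rn N → ℂ, IsNLS g u →
      sobNorm 1 (fun x => u 0 x - φ x) < ENNReal.ofReal δ →
      ∀ t : ℝ, 0 ≤ t → ∃ (θ : ℝ) (y : Rn N),
        sobNorm 1 (fun x => u t x - Complex.exp (θ * Complex.I) * φ (x + y)) <
          ENNReal.ofReal ε

/-- h(v) = J[f(φ+v) - f(φ) - Df(φ)v] in the identification ℝ² ≅ ℂ. -/
def hfun (f : ℂ → ℂ) (φ v : Rn N → ℂ) : Rn N → ℂ :=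
  fun x => -Complex.I * (f (φ x + v x) - f (φ x) - fderiv ℝ f (φ x) (v x))

/-- ∂ₜ h(v) = J[Df(φ+v) - Df(φ)]∂ₜv. -/
def hderiv (f : ℂ → ℂ) (φ : Rn N → ℂ) (v : ℝ → Rn N → ℂ) : ℝ → Rn N → ℂ :=
  fun t x => -Complex.I * ((fderiv ℝ f (φ x + v t x) - fderiv ℝ f (φ x)) (tderiv v t x))

/-- v is a (global H²) solution of ∂ₜv = Av + h(v). -/
def IsLinSol (g : ℝ → ℝ) (ω : ℝ) (φ : Rn N → ℂ) (v : ℝ → Rn N → ℂ) : Prop :=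
  (∀ t, MemSobolev 2 (v t)) ∧
    ∀ t x, HasDerivAt (fun s => v s x)
      (Aop g ω φ (v t) x + hfun (fpot g) φ (v t) x) t

/-- The operator A = JH₀ + V with a bounded 2×2 matrix potential V,
acting on ℂ²-valued functions. -/
def AVop (ω : ℝ) (V : Rn N → Matrix (Fin 2) (Fin 2) ℝ) (u : Rn N → ℂ × ℂ) :
    Rn N → ℂ × ℂ :=
  fun x =>
    ((-(lap (fun y => (u y).2) x) + (ω : ℂ) * (u x).2) +
        ((V x 0 0 : ℝ) : ℂ) * (u x).1 + ((V x 0 1 : ℝ) : ℂ) * (u x).2,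
     (-(-(lap (fun y => (u y).1) x) + (ω : ℂ) * (u x).1)) +
        ((V x 1 0 : ℝ) : ℂ) * (u x).1 + ((V x 1 1 : ℝ) : ℂ) * (u x).2)

/-- V is a bounded (L^∞) matrix potential. -/
def VBounded (V : Rn N → Matrix (Fin 2) (Fin 2) ℝ) : Prop :=
  (∀ i j, Measurable fun x => V x i j) ∧ ∃ M : ℝ, ∀ x i j, |V x i j| ≤ M

/-- S is the strongly continuous group on L² generated by the operator L. -/
structure IsEvolGroupC (L : (Rn N → ℂ × ℂ) → (Rn N → ℂ × ℂ))
    (S : ℝ → (Rn N → ℂ × ℂ) → (Rn N → ℂ × ℂ)) : Prop where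
  zero : ∀ u, S 0 u = u
  comp : ∀ s t u, S (s + t) u = S s (S t u)
  lin : ∀ (t : ℝ) (a : ℂ) (u v : Rn N → ℂ × ℂ),
    S t (fun x => a • u x + v x) = fun x => a • S t u x + S t v x
  cont : ∀ u, MemLp u 2 volume → ∀ t₀ : ℝ,
    Filter.Tendsto (fun t => eLpNorm (fun x => S t u x - S t₀ u x) 2 volume)
      (nhds t₀) (nhds 0)
  gen : ∀ u, MemSobolev 2 u → ∀ t : ℝ,
    MemSobolev 2 (S t u) ∧ ∀ x, HasDerivAt (fun s => S s u x) (L (S t u) x) t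

/-- Γ[f](t) = ∫₀ᵗ e^{(t-s)A} f(s) ds. -/
def Gamma (S : ℝ → (Rn N → ℂ × ℂ) → (Rn N → ℂ × ℂ)) (f : ℝ → Rn N → ℂ × ℂ)
    (t : ℝ) : Rn N → ℂ × ℂ :=
  fun x => ∫ s in (0:ℝ)..t, S (t - s) (f s) x

/-- α = min{1, r₁-2, r₂-2}. -/
def alphaConst (r₁ r₂ : ℝ) : ℝ := min 1 (min (r₁ - 2) (r₂ - 2))

/-- Real part of a ℂ²-valued function, as an element of the real space L²(ℝ^N,ℝ²) ≅ L²(ℝ^N,ℂ). -/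
def reChi (χ : Rn N → ℂ × ℂ) : Rn N → ℂ :=
  fun x => ((χ x).1.re : ℂ) + ((χ x).2.re : ℂ) * Complex.I

/-- The constant k = 1 if Im λ* = 0, k = exp(2π Re λ*/|Im λ*|) otherwise. -/
def kconst (lam : ℂ) : ℝ :=
  if lam.im = 0 then 1 else Real.exp (2 * Real.pi * lam.re / |lam.im|)

/-- The defining property of T_δ:
log(ε₀/(kδ)) ≤ Re λ* T_δ ≤ log(ε₀/δ) and Im λ* T_δ ∈ 2πℤ. -/
def TdeltaProp (lam : ℂ) (ε₀ δ T : ℝ) : Prop :=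
  Real.log (ε₀ / (kconst lam * δ)) ≤ lam.re * T ∧
    lam.re * T ≤ Real.log (ε₀ / δ) ∧ ∃ n : ℤ, lam.im * T = 2 * Real.pi * (n : ℝ)

/-- The real L² inner product on L²(ℝ^N,ℝ²) in the identification ℝ² ≅ ℂ. -/
def realL2inner (u v : Rn N → ℂ) : ℝ :=
  ∫ x, ((starRingEnd ℂ) (u x) * v x).re

/-- The L² inner product for ℂ²-valued functions. -/
def l2innerC2 (u v : Rn N → ℂ × ℂ) : ℂ :=
  ∫ x, ((starRingEnd ℂ) (u x).1 * (v x).1 + (starRingEnd ℂ) (u x).2 * (v x).2)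

section Resolvent

variable {G : Type} [NormedAddCommGroup G] [NormedSpace ℂ G]

/-- z belongs to the resolvent set of the operator L with domain `dom`:
there is a bounded everywhere-defined inverse of z - L mapping L² into the domain. -/
def InResSet (L : (Rn N → G) → (Rn N → G)) (dom : (Rn N → G) → Prop) (z : ℂ) : Prop :=
  ∃ R : (Rn N → G) → (Rn N → G),
    (∀ (a : ℂ) (u v : Rn N → G), R (fun x => a • u x + v x) = fun x => a • R u x + R v x) ∧
    (∀ u, MemLp u 2 volume → dom (R u)) ∧
    (∀ u, MemLp u 2 volume → ∀ x, z • R u x - L (R u) x = u x) ∧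
    (∀ u, dom u → ∀ x, R (fun y => z • u y - L u y) x = u x) ∧
    ∃ M : ℝ, ∀ u, eLpNorm (R u) 2 volume ≤ ENNReal.ofReal M * eLpNorm u 2 volume

/-- The spectrum of the operator L with domain `dom`. -/
def specSet (L : (Rn N → G) → (Rn N → G)) (dom : (Rn N → G) → Prop) : Set ℂ :=
  {z | ¬ InResSet L dom z}

end Resolvent

/-- z belongs to the essential spectrum of A (Weyl singular sequence characterization). -/
def InEssSpec (g : ℝ → ℝ) (ω : ℝ) (φ : Rn N → ℂ) (z : ℂ) : Prop :=
  ∃ u : ℕ → Rn N → ℂ × ℂ,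
    (∀ n, MemSobolev 2 (u n)) ∧ (∀ n, eLpNorm (u n) 2 volume = 1) ∧
    Filter.Tendsto
      (fun n => eLpNorm (fun x => AopC g ω φ (u n) x - z • u n x) 2 volume)
      Filter.atTop (nhds 0) ∧
    ∀ w : Rn N → ℂ × ℂ, MemLp w 2 volume →
      Filter.Tendsto (fun n => l2innerC2 (u n) w) Filter.atTop (nhds 0)

/-- The operator D = -Δ + ω acting on complex-valued functions. -/
def Dop (ω : ℝ) (u : Rn N → ℂ) : Rn N → ℂ :=
  fun x => -(lap u x) + (ω : ℂ) * u x

/-- The operator L(ξ) = [[ξ, -D],[D, ξ]]. -/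
def Lxi (ω : ℝ) (ξ : ℂ) (u : Rn N → ℂ × ℂ) : Rn N → ℂ × ℂ :=
  fun x => (ξ * (u x).1 - Dop ω (fun y => (u y).2) x,
            Dop ω (fun y => (u y).1) x + ξ * (u x).2)

/-- φ is a weak H¹ solution of -Δφ + ωφ - g(|φ|²)φ = 0. -/
def WeakH1Sol (ω : ℝ) (g : ℝ → ℝ) (φ : Rn N → ℂ) : Prop :=
  MemLp φ 2 volume ∧ Differentiable ℝ φ ∧ MemLp (fderiv ℝ φ) 2 volume ∧
    ∀ ψ : Rn N → ℂ, ContDiff ℝ (⊤ : ℕ∞) ψ → HasCompactSupport ψ →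
      ((∫ x, ∑ i : Fin N,
          fderiv ℝ φ x (EuclideanSpace.single i 1) *
            fderiv ℝ ψ x (EuclideanSpace.single i 1)) +
        (∫ x, (ω : ℂ) * φ x * ψ x) -
        ∫ x, ((g (Complex.normSq (φ x)) : ℝ) : ℂ) * φ x * ψ x) = 0

end

noncomputable section

/-- The power nonlinearity f(z) = -|z|^{p-1} z on ℝ² ≅ ℂ. -/
def fpow (p : ℝ) : ℂ → ℂ := fun z => -((‖z‖ ^ (p - 1) : ℝ) : ℂ) * z

end

noncomputable section

open scoped NNReal in
theorem aux_mono {E G : Type*} [MeasurableSpace E] [NormedAddCommGroup G]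
    (m : Measure E) (B : Set E) (hB : m B ≠ ∞) (p : ℝ≥0∞) (hp : p ≤ 2) (hp1 : 1 ≤ p) :
    ∃ K : ℝ≥0, ∀ F : E → G,
    AEStronglyMeasurable F m → F.support ⊆ B →
    eLpNorm F p m ≤ K * eLpNorm F 2 m := by
  have hfin : (m B) ^ (1 / p.toReal - 1 / (2:ℝ≥0∞).toReal) ≠ ∞ := by
    refine ENNReal.rpow_ne_top_of_nonneg ?_ hB
    have h2 : p.toReal ≤ 2 := by
      have := ENNReal.toReal_mono (by simp) hp
      simpa using this
    have h1 : 1 ≤ p.toReal := by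
      have := ENNReal.toReal_mono (ne_top_of_le_ne_top (by simp) hp) hp1
      simpa using this
    simp only [ENNReal.toReal_ofNat, sub_nonneg]
    exact one_div_le_one_div_of_le (by linarith) h2
  refine ⟨((m B) ^ (1 / p.toReal - 1 / (2:ℝ≥0∞).toReal)).toNNReal, fun F hF hs => ?_⟩
  rw [← eLpNorm_restrict_eq_of_support_subset hs,
    ← eLpNorm_restrict_eq_of_support_subset (p := 2) hs, mul_comm]
  refine (eLpNorm_le_eLpNorm_mul_rpow_measure_univ hp hF.restrict).trans ?_
  rw [Measure.restrict_apply_univ, ENNReal.coe_toNNReal hfin]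

open scoped NNReal in
theorem aux_fderiv_mono {N : ℕ} (p : ℝ≥0∞) (hp : p ≤ 2) (hp1 : 1 ≤ p) : ∃ K : ℝ≥0, ∀ w : Rn N → ℂ,
    ContDiff ℝ 1 w → w.support ⊆ Metric.closedBall 0 2 →
    eLpNorm (fderiv ℝ w) p volume ≤ K * eLpNorm (fderiv ℝ w) 2 volume := by
  obtain ⟨K, hK⟩ := aux_mono (G := Rn N →L[ℝ] ℂ) (volume : Measure (Rn N)) (Metric.closedBall 0 2)
    measure_closedBall_lt_top.ne p hp hp1
  refine ⟨K, fun w hw hs => hK _ (hw.continuous_fderiv one_ne_zero).aestronglyMeasurable ?_⟩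
  exact (support_fderiv_subset ℝ).trans (closure_minimal hs Metric.isClosed_closedBall)

open scoped NNReal in
theorem aux_sup_one {w : Rn 1 → ℂ} (hw : ContDiff ℝ 1 w) (hs : w.support ⊆ Metric.closedBall 0 2)
    (x : Rn 1) : ‖w x‖ₑ ≤ eLpNorm (fderiv ℝ w) 1 volume := by
  let e : ℝ →L[ℝ] Rn 1 := ContinuousLinearMap.toSpanSingleton ℝ (EuclideanSpace.single 0 1)
  have he : ∀ t, e t = WithLp.toLp 2 ((MeasurableEquiv.funUnique (Fin 1) ℝ).symm t) := by
    intro t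
    ext i
    fin_cases i
    simp [e, MeasurableEquiv.funUnique]
  have hmp : MeasurePreserving e volume volume := by
    have := (PiLp.volume_preserving_toLp (Fin 1)).comp
      ((volume_preserving_funUnique (Fin 1) ℝ).symm)
    have h2 : (e : ℝ → Rn 1) = WithLp.toLp 2 ∘ ⇑(MeasurableEquiv.funUnique (Fin 1) ℝ).symm :=
      funext he
    rw [h2]
    exact this
  have hn : ∀ t, ‖e t‖ = |t| := by
    intro t
    simp [e, norm_smul]
  have hc : HasCompactSupport (w ∘ e) := by
    refine HasCompactSupport.intro (isCompact_closedBall (0:ℝ) 2) (fun t ht => ?_)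
    by_contra h
    have := hs h
    simp only [Metric.mem_closedBall, dist_zero_right, hn] at this
    simp at ht
    linarith
  have hx : e (x 0) = x := by
    ext i
    fin_cases i
    simp [e]
  have h := HasCompactSupport.enorm_le_lintegral_Ici_deriv (hw.comp e.contDiff) hc (x 0)
  rw [Function.comp_apply, hx] at h
  refine h.trans ((setLIntegral_le_lintegral _ _).trans ?_)
  rw [eLpNorm_one_eq_lintegral_enorm, ← hmp.lintegral_comp (hw.continuous_fderiv one_ne_zero).enorm.measurable]
  refine lintegral_mono (fun t => ?_)
  have hd : HasDerivAt (w ∘ e) (fderiv ℝ w (e t) (e 1)) t :=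
    ((hw.differentiable one_ne_zero _).hasFDerivAt).comp_hasDerivAt t e.hasDerivAt
  rw [hd.deriv]
  refine (ContinuousLinearMap.le_opENorm _ _).trans ?_
  have : ‖e 1‖ₑ = 1 := by
    rw [← ofReal_norm, hn]; simp
  rw [this, mul_one]

open scoped NNReal in
theorem local_sob {N : ℕ} (hN : 1 ≤ N) (r : ℝ≥0) (hr : 2 ≤ r)
    (hsub : 3 ≤ N → (r:ℝ) ≤ 2 * N / (N - 2)) : ∃ K : ℝ≥0, ∀ w : Rn N → ℂ,
    ContDiff ℝ 1 w → w.support ⊆ Metric.closedBall 0 2 →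
    eLpNorm w r volume ≤ K * eLpNorm (fderiv ℝ w) 2 volume := by
  have hr' : (2:ℝ) ≤ r := by exact_mod_cast hr
  have main : ∀ p : ℝ≥0, 1 ≤ p → p ≤ 2 → p < N → (p:ℝ)⁻¹ - (N:ℝ)⁻¹ ≤ (r:ℝ)⁻¹ →
      ∃ K : ℝ≥0, ∀ w : Rn N → ℂ,
      ContDiff ℝ 1 w → w.support ⊆ Metric.closedBall 0 2 →
      eLpNorm w r volume ≤ K * eLpNorm (fderiv ℝ w) 2 volume := by
    intro p hp1 hp2 hpN hpr
    obtain ⟨K, hK⟩ := aux_fderiv_mono (N := N) (p : ℝ≥0∞) (by exact_mod_cast hp2) (by exact_mod_cast hp1)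
    refine ⟨eLpNormLESNormFDerivOfLeConst ℂ (volume : Measure (Rn N)) (Metric.closedBall 0 2) p r * K, fun w hw hs => ?_⟩
    refine (eLpNorm_le_eLpNorm_fderiv_of_le volume hw hs hp1 (by simpa using hpN)
      (by simpa using hpr) Metric.isBounded_closedBall).trans ?_
    rw [ENNReal.coe_mul, mul_assoc]
    gcongr
    exact hK w hw hs
  rcases (by omega : N = 1 ∨ N = 2 ∨ 3 ≤ N) with h | h | h
  · subst h
    obtain ⟨K, hK⟩ := aux_fderiv_mono (N := 1) 1 (by norm_num) le_rfl
    have hfin : (volume (Metric.closedBall (0 : Rn 1) 2)) ^ (1 / (r:ℝ)) ≠ ∞ :=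
      ENNReal.rpow_ne_top_of_nonneg (by positivity) measure_closedBall_lt_top.ne
    refine ⟨((volume (Metric.closedBall (0 : Rn 1) 2)) ^ (1 / (r:ℝ))).toNNReal * K, fun w hw hs => ?_⟩
    rw [← eLpNorm_restrict_eq_of_support_subset hs, ENNReal.coe_mul, ENNReal.coe_toNNReal hfin, mul_assoc]
    have h0 := eLpNorm_le_eLpNorm_mul_rpow_measure_univ (μ := volume.restrict (Metric.closedBall 0 2)) (p := r) (q := ∞) le_top hw.continuous.aestronglyMeasurable
    refine h0.trans ?_
    rw [Measure.restrict_apply_univ, mul_comm]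
    have hex : 1 / (r:ℝ≥0∞).toReal - 1 / (∞ : ℝ≥0∞).toReal = 1 / (r:ℝ) := by simp
    rw [hex]
    refine mul_le_mul_right ?_ _
    rw [eLpNorm_exponent_top]
    refine le_trans ?_ (hK w hw hs)
    exact essSup_le_of_ae_le _ (Filter.Eventually.of_forall fun x => aux_sup_one hw hs x)
  · subst h
    refine main (2 * r / (r + 2)) ?_ ?_ ?_ ?_
    · rw [← NNReal.coe_le_coe]; push_cast
      rw [le_div_iff₀ (by positivity)]; linarith
    · rw [← NNReal.coe_le_coe]; push_cast
      rw [div_le_iff₀ (by positivity)]; linarith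
    · rw [← NNReal.coe_lt_coe]; push_cast
      rw [div_lt_iff₀ (by positivity)]; linarith
    · push_cast
      apply le_of_eq
      field_simp
      ring
  · have h3 : (3:ℝ) ≤ N := by exact_mod_cast h
    refine main 2 (by norm_num) le_rfl (by exact_mod_cast (by omega : 2 < N)) ?_
    have := hsub h
    rw [le_div_iff₀ (by linarith)] at this
    have : (0:ℝ) ≤ (r:ℝ)⁻¹ - ((2:ℝ)⁻¹ - (N:ℝ)⁻¹) := by
      have e : (r:ℝ)⁻¹ - ((2:ℝ)⁻¹ - (N:ℝ)⁻¹) = (2 * N - r * (N - 2)) / (2 * r * N) := by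
        field_simp
      rw [e]
      apply div_nonneg (by linarith) (by positivity)
    push_cast
    linarith

theorem aux_tonelli {N : ℕ} (B : Set (Rn N)) (G : Rn N → ℝ≥0∞) (hG : Measurable G) :
    ∫⁻ y : Rn N, ∫⁻ x in B, G (x + y) = volume B * ∫⁻ y, G y := by
  rw [lintegral_lintegral_swap]
  · simp only [lintegral_add_left_eq_self]
    rw [lintegral_const, Measure.restrict_apply_univ, mul_comm]
  · exact (hG.comp (measurable_snd.add measurable_fst)).aemeasurable

open scoped NNReal in
theorem aux_cutoff {N : ℕ} : ∃ (χ : Rn N → ℝ) (M : ℝ≥0), ContDiff ℝ 1 χ ∧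
    χ.support ⊆ Metric.closedBall 0 2 ∧ (∀ x ∈ Metric.closedBall 0 1, χ x = 1) ∧
    (∀ x, ‖χ x‖ ≤ M) ∧ (∀ x, ‖fderiv ℝ χ x‖ ≤ M) := by
  let χ : ContDiffBump (0 : Rn N) := ⟨1, 2, one_pos, one_lt_two⟩
  have hc : ContDiff ℝ 1 χ := χ.contDiff
  have hcs : HasCompactSupport χ := χ.hasCompactSupport
  obtain ⟨M, hM⟩ := (hcs.fderiv ℝ).exists_bound_of_continuous (hc.continuous_fderiv one_ne_zero)
  refine ⟨χ, 1 + ‖M‖₊, hc, ?_, ?_, ?_, ?_⟩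
  · rw [χ.support_eq]; exact Metric.ball_subset_closedBall
  · intro x hx; exact χ.one_of_mem_closedBall hx
  · intro x
    rw [Real.norm_of_nonneg χ.nonneg]
    have := χ.le_one (x := x)
    push_cast
    have := norm_nonneg M
    linarith
  · intro x
    have := hM x
    have h2 := Real.le_norm_self M
    push_cast
    linarith

open scoped NNReal in
theorem global_sob {N : ℕ} (hN : 1 ≤ N) (r : ℝ≥0) (hr : 2 ≤ r)
    (hsub : 3 ≤ N → (r:ℝ) ≤ 2 * N / (N - 2)) : ∃ K : ℝ≥0, ∀ u : Rn N → ℂ,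
    ContDiff ℝ 1 u →
    eLpNorm u r volume ≤ K * (eLpNorm u 2 volume + eLpNorm (fderiv ℝ u) 2 volume) := by
  obtain ⟨K, hK⟩ := local_sob hN r hr hsub
  obtain ⟨χ, M, hχ, hχs, hχ1, hχM, hχM'⟩ := aux_cutoff (N := N)
  have hr' : (2:ℝ) ≤ r := by exact_mod_cast hr
  have hr0 : (r : ℝ≥0∞) ≠ 0 := by
    simp only [ne_eq, ENNReal.coe_eq_zero]; rintro rfl; norm_num at hr
  set c := volume (Metric.closedBall (0 : Rn N) 1) with hc
  have hc0 : c ≠ 0 := (Metric.measure_closedBall_pos _ _ one_pos).ne'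
  have hcT : c ≠ ∞ := measure_closedBall_lt_top.ne
  set V := volume (Metric.closedBall (0 : Rn N) 2) with hV
  have hVT : V ≠ ∞ := measure_closedBall_lt_top.ne
  let D : ℝ≥0∞ := (M:ℝ≥0∞) ^ (2:ℝ) * 2 ^ ((2:ℝ) - 1)
  have hDT : D ≠ ∞ := by
    apply ENNReal.mul_ne_top
    · exact ENNReal.rpow_ne_top_of_nonneg (by norm_num) ENNReal.coe_ne_top
    · exact ENNReal.rpow_ne_top_of_nonneg (by norm_num) (by simp)
  let L : ℝ≥0∞ := (K:ℝ≥0∞) ^ (r:ℝ) * D ^ ((r:ℝ)/2)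
  have hLT : L ≠ ∞ := by
    apply ENNReal.mul_ne_top
    · exact ENNReal.rpow_ne_top_of_nonneg (by positivity) ENNReal.coe_ne_top
    · exact ENNReal.rpow_ne_top_of_nonneg (by positivity) hDT
  let Q : ℝ≥0∞ := (c⁻¹ * (L * V)) ^ (1 / (r:ℝ))
  have hQT : Q ≠ ∞ := by
    refine ENNReal.rpow_ne_top_of_nonneg (by positivity) ?_
    exact ENNReal.mul_ne_top (by simpa using hc0) (ENNReal.mul_ne_top hLT hVT)
  refine ⟨Q.toNNReal, fun u hu => ?_⟩
  rw [ENNReal.coe_toNNReal hQT]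
  have hum : Continuous u := hu.continuous
  have hdm : Continuous (fderiv ℝ u) := hu.continuous_fderiv one_ne_zero
  let F : Rn N → ℝ≥0∞ := fun x => ‖u x‖ₑ ^ (2:ℝ) + ‖fderiv ℝ u x‖ₑ ^ (2:ℝ)
  have hF : Measurable F := (hum.enorm.measurable.pow_const _).add (hdm.enorm.measurable.pow_const _)
  let S := ∫⁻ x, F x
  have hlp : ∀ {G : Type} [NormedAddCommGroup G] (f : Rn N → G),
      eLpNorm f r volume = (∫⁻ x, ‖f x‖ₑ ^ (r:ℝ)) ^ (1 / (r:ℝ)) := by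
    intro G _ f
    rw [eLpNorm_eq_lintegral_rpow_enorm_toReal hr0 ENNReal.coe_ne_top, ENNReal.coe_toReal]
  have hl2 : ∀ {G : Type} [NormedAddCommGroup G] (f : Rn N → G),
      eLpNorm f 2 volume = (∫⁻ x, ‖f x‖ₑ ^ (2:ℝ)) ^ (1 / (2:ℝ)) := by
    intro G _ f
    rw [eLpNorm_eq_lintegral_rpow_enorm_toReal (by norm_num) (by norm_num), ENNReal.toReal_ofNat]
  have hS : S ^ (1 / (2:ℝ)) ≤ eLpNorm u 2 volume + eLpNorm (fderiv ℝ u) 2 volume := by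
    have e : S = eLpNorm u 2 volume ^ (2:ℝ) + eLpNorm (fderiv ℝ u) 2 volume ^ (2:ℝ) := by
      rw [hl2, hl2, ← ENNReal.rpow_mul, ← ENNReal.rpow_mul]
      rw [show 1 / (2:ℝ) * 2 = 1 by norm_num, ENNReal.rpow_one, ENNReal.rpow_one]
      exact lintegral_add_left (hum.enorm.measurable.pow_const _) _
    rw [e]
    exact ENNReal.rpow_add_rpow_le_add _ _ (by norm_num)
  -- pointwise in y
  have key : ∀ y : Rn N, ∫⁻ x in Metric.closedBall 0 1, ‖u (x + y)‖ₑ ^ (r:ℝ) ≤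
      L * S ^ ((r:ℝ)/2 - 1) * ∫⁻ x in Metric.closedBall 0 2, F (x + y) := by
    intro y
    let uy : Rn N → ℂ := fun x => u (x + y)
    have huy : ContDiff ℝ 1 uy := hu.comp (contDiff_id.add contDiff_const)
    let w : Rn N → ℂ := fun x => χ x • uy x
    have hw : ContDiff ℝ 1 w := hχ.smul huy
    have hws : w.support ⊆ Metric.closedBall 0 2 := by
      intro x hx
      apply hχs
      intro h0
      apply hx
      simp [w, h0]
    set A := ∫⁻ x in Metric.closedBall 0 2, F (x + y) with hA
    have hAS : A ≤ S := by
      refine (setLIntegral_le_lintegral _ _).trans (le_of_eq ?_)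
      exact lintegral_add_right_eq_self F y
    have h1 : ∫⁻ x in Metric.closedBall 0 1, ‖u (x + y)‖ₑ ^ (r:ℝ) ≤ ∫⁻ x, ‖w x‖ₑ ^ (r:ℝ) := by
      refine le_trans (le_of_eq ?_) (setLIntegral_le_lintegral (Metric.closedBall 0 1) _)
      refine setLIntegral_congr_fun Metric.isClosed_closedBall.measurableSet (fun x hx => ?_)
      simp [w, uy, hχ1 x hx]
    have h2 : ∫⁻ x, ‖w x‖ₑ ^ (r:ℝ) ≤ (K * eLpNorm (fderiv ℝ w) 2 volume) ^ (r:ℝ) := by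
      refine le_trans (le_of_eq ?_) (ENNReal.rpow_le_rpow (hK w hw hws) (by positivity))
      rw [hlp, ← ENNReal.rpow_mul, one_div_mul_cancel (by positivity), ENNReal.rpow_one]
    have h3 : ∫⁻ x, ‖fderiv ℝ w x‖ₑ ^ (2:ℝ) ≤ D * A := by
      have hsupp : (fderiv ℝ w).support ⊆ Metric.closedBall 0 2 :=
        (support_fderiv_subset ℝ).trans (closure_minimal hws Metric.isClosed_closedBall)
      have e : ∫⁻ x, ‖fderiv ℝ w x‖ₑ ^ (2:ℝ) =
          ∫⁻ x in Metric.closedBall 0 2, ‖fderiv ℝ w x‖ₑ ^ (2:ℝ) := by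
        symm
        apply setLIntegral_eq_of_support_subset
        intro x hx
        apply hsupp
        intro h0
        apply hx
        have h00 : ‖fderiv ℝ w x‖ₑ = 0 := by rw [← ofReal_norm, h0, norm_zero, ENNReal.ofReal_zero]
        change ‖fderiv ℝ w x‖ₑ ^ (2:ℝ) = 0
        rw [h00]
        exact ENNReal.zero_rpow_of_pos (by norm_num)
      have hFy : Measurable fun x => F (x + y) := hF.comp (measurable_id.add_const y)
      rw [e, hA, ← lintegral_const_mul _ hFy]
      refine lintegral_mono (fun x => ?_)
      have hd : fderiv ℝ w x = χ x • fderiv ℝ u (x + y) + (fderiv ℝ χ x).smulRight (u (x + y)) := by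
        have := fderiv_smul (hχ.differentiable one_ne_zero x) (huy.differentiable one_ne_zero x)
        rw [show fderiv ℝ uy x = fderiv ℝ u (x + y) from fderiv_comp_add_right y] at this
        exact this
      have hb : ‖fderiv ℝ w x‖ₑ ≤ M * (‖u (x + y)‖ₑ + ‖fderiv ℝ u (x + y)‖ₑ) := by
        have : ‖fderiv ℝ w x‖ ≤ M * (‖u (x + y)‖ + ‖fderiv ℝ u (x + y)‖) := by
          rw [hd]
          refine (norm_add_le _ _).trans ?_
          rw [norm_smul, ContinuousLinearMap.norm_smulRight_apply]
          have a1 := mul_le_mul_of_nonneg_right (hχM x) (norm_nonneg (fderiv ℝ u (x + y)))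
          have a2 := mul_le_mul_of_nonneg_right (hχM' x) (norm_nonneg (u (x + y)))
          linarith
        have := ENNReal.ofReal_le_ofReal this
        rwa [ENNReal.ofReal_mul (by positivity), ENNReal.ofReal_add (by positivity) (by positivity),
          ofReal_norm, ofReal_norm, ofReal_norm, ENNReal.ofReal_coe_nnreal] at this
      calc ‖fderiv ℝ w x‖ₑ ^ (2:ℝ) ≤ (M * (‖u (x + y)‖ₑ + ‖fderiv ℝ u (x + y)‖ₑ)) ^ (2:ℝ) :=
            ENNReal.rpow_le_rpow hb (by norm_num)
        _ = M ^ (2:ℝ) * (‖u (x + y)‖ₑ + ‖fderiv ℝ u (x + y)‖ₑ) ^ (2:ℝ) :=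
            ENNReal.mul_rpow_of_nonneg _ _ (by norm_num)
        _ ≤ M ^ (2:ℝ) * (2 ^ ((2:ℝ) - 1) * F (x + y)) := by
            gcongr
            exact ENNReal.rpow_add_le_mul_rpow_add_rpow _ _ (by norm_num)
        _ = D * F (x + y) := by rw [← mul_assoc]
    have h4 : (K * eLpNorm (fderiv ℝ w) 2 volume) ^ (r:ℝ) ≤ L * A ^ ((r:ℝ)/2) := by
      rw [ENNReal.mul_rpow_of_nonneg _ _ (by positivity), hl2, ← ENNReal.rpow_mul, mul_assoc,
        ← ENNReal.mul_rpow_of_nonneg _ _ (by positivity)]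
      gcongr
      rw [one_div_mul_eq_div]
      exact ENNReal.rpow_le_rpow h3 (by positivity)
    refine (h1.trans (h2.trans h4)).trans ?_
    rw [mul_assoc L]
    refine mul_le_mul_right ?_ _
    calc A ^ ((r:ℝ)/2) = A ^ (((r:ℝ)/2 - 1) + 1) := by ring_nf
      _ = A ^ ((r:ℝ)/2 - 1) * A := by
        rw [ENNReal.rpow_add_of_nonneg _ _ (by linarith) (by norm_num), ENNReal.rpow_one]
      _ ≤ S ^ ((r:ℝ)/2 - 1) * A := by
        gcongr
        linarith
  have hint : c * ∫⁻ x, ‖u x‖ₑ ^ (r:ℝ) ≤ L * V * S ^ ((r:ℝ)/2) := by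
    rw [← aux_tonelli _ _ (hum.enorm.measurable.pow_const _)]
    refine (lintegral_mono key).trans ?_
    rw [lintegral_const_mul, aux_tonelli _ _ hF]
    · apply le_of_eq
      have : S ^ ((r:ℝ)/2) = S ^ ((r:ℝ)/2 - 1) * S := by
        rw [show (r:ℝ)/2 = ((r:ℝ)/2 - 1) + 1 by ring, ENNReal.rpow_add_of_nonneg _ _ (by linarith) (by norm_num), ENNReal.rpow_one]
        ring_nf
      rw [this]
      change L * S ^ ((r:ℝ)/2 - 1) * (V * S) = _
      ring
    · have : Measurable (Function.uncurry fun (y x : Rn N) => F (x + y)) :=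
        hF.comp (measurable_snd.add measurable_fst)
      exact this.lintegral_prod_right
  have hfin : ∫⁻ x, ‖u x‖ₑ ^ (r:ℝ) ≤ c⁻¹ * (L * V) * S ^ ((r:ℝ)/2) := by
    rw [mul_assoc, ← ENNReal.mul_le_iff_le_inv hc0 hcT]
    exact hint
  rw [hlp]
  refine (ENNReal.rpow_le_rpow hfin (by positivity)).trans ?_
  rw [ENNReal.mul_rpow_of_nonneg _ _ (by positivity), ← ENNReal.rpow_mul]
  refine mul_le_mul_right (le_trans (le_of_eq ?_) hS) _
  congr 1
  field_simp

theorem time_bound (κ : ℝ) (hκ : 0 < κ) (q : ℝ≥0∞) (hq : 1 ≤ q) : ∃ C : ℝ≥0∞, C ≠ ∞ ∧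
    ∀ (T : ℝ) (Φ : ℝ → ℝ≥0∞) (A : ℝ≥0∞),
    (∀ᵐ t ∂(volume.restrict (Set.Ioo 0 T)), Φ t ≤ A * ENNReal.ofReal (Real.exp (κ * (t - T)))) →
    timeLp q T Φ ≤ C * A := by
  by_cases hqt : q = ∞
  · refine ⟨1, by simp, fun T Φ A h => ?_⟩
    rw [timeLp, if_pos hqt, one_mul]
    refine essSup_le_of_ae_le _ ?_
    filter_upwards [h, ae_restrict_mem measurableSet_Ioo] with t ht hm
    refine ht.trans ?_
    calc A * ENNReal.ofReal (Real.exp (κ * (t - T))) ≤ A * 1 := by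
          gcongr
          rw [ENNReal.ofReal_le_one, Real.exp_le_one_iff]
          have := hm.2
          nlinarith
      _ = A := mul_one A
  · set q' := q.toReal with hq'
    have h1 : 1 ≤ q' := by
      have := ENNReal.toReal_mono hqt hq
      simpa using this
    let G : ℝ → ℝ≥0∞ := (Set.Iic 0).indicator fun t => ENNReal.ofReal (Real.exp (κ * t))
    let c := ∫⁻ t, G t
    have hc : c ≠ ∞ := by
      have hi : IntegrableOn (fun t => Real.exp (κ * t)) (Set.Iic 0) := integrableOn_exp_mul_Iic hκ 0
      have : c = ∫⁻ t in Set.Iic 0, ENNReal.ofReal (Real.exp (κ * t)) :=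
        lintegral_indicator measurableSet_Iic _
      rw [this, ← ofReal_integral_eq_lintegral_ofReal hi (Filter.Eventually.of_forall fun t => (Real.exp_pos _).le)]
      exact ENNReal.ofReal_ne_top
    refine ⟨c ^ (1 / q'), ENNReal.rpow_ne_top_of_nonneg (by positivity) hc, fun T Φ A h => ?_⟩
    rw [timeLp, if_neg hqt]
    have hG : Measurable fun t => G (t - T) := by
      have : Measurable G := by
        apply Measurable.indicator _ measurableSet_Iic
        fun_prop
      exact this.comp (measurable_id.sub_const T)
    have h2 : ∫⁻ t in Set.Ioo 0 T, Φ t ^ q' ≤ A ^ q' * c := by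
      calc ∫⁻ t in Set.Ioo 0 T, Φ t ^ q' ≤ ∫⁻ t in Set.Ioo 0 T, A ^ q' * G (t - T) := by
            apply lintegral_mono_ae
            filter_upwards [h, ae_restrict_mem measurableSet_Ioo] with t ht hm
            refine (ENNReal.rpow_le_rpow ht (by positivity)).trans ?_
            rw [ENNReal.mul_rpow_of_nonneg _ _ (by positivity)]
            gcongr
            have hle : t - T ≤ 0 := by linarith [hm.2]
            have : G (t - T) = ENNReal.ofReal (Real.exp (κ * (t - T))) :=
              Set.indicator_of_mem (s := Set.Iic (0:ℝ)) hle _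
            rw [this, ENNReal.ofReal_rpow_of_nonneg (Real.exp_pos _).le (by positivity), ← Real.exp_mul]
            apply ENNReal.ofReal_le_ofReal
            rw [Real.exp_le_exp]
            have : κ * (t - T) ≤ 0 := by nlinarith
            nlinarith
        _ ≤ ∫⁻ t, A ^ q' * G (t - T) := setLIntegral_le_lintegral _ _
        _ = A ^ q' * c := by
            rw [lintegral_const_mul _ hG, lintegral_sub_right_eq_self]
    refine (ENNReal.rpow_le_rpow h2 (by positivity)).trans ?_
    rw [ENNReal.mul_rpow_of_nonneg _ _ (by positivity), ← ENNReal.rpow_mul,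
      mul_one_div_cancel (by positivity), ENNReal.rpow_one, mul_comm]

theorem pw_bound (p : ℝ) (hp : 1 < p) (f : ℂ → ℂ) (hf : H1bound p f) : ∃ C : ℝ, 0 ≤ C ∧
    (p ≤ 2 → ∀ a b : ℂ, ‖f (a + b) - f a - fderiv ℝ f a b‖ ≤ C * ‖b‖ ^ p) ∧
    (2 < p → ∀ a b : ℂ, ‖f (a + b) - f a - fderiv ℝ f a b‖ ≤
      C * (‖a‖ ^ (p - 2) * ‖b‖ ^ (2:ℝ) + ‖b‖ ^ p)) := by
  obtain ⟨hc, -, -, C, hC1, hC2⟩ := hf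
  have mv : ∀ (a b : ℂ) (B : ℝ), (∀ z ∈ Metric.closedBall a ‖b‖, ‖fderiv ℝ f z - fderiv ℝ f a‖ ≤ B) →
      ‖f (a + b) - f a - fderiv ℝ f a b‖ ≤ B * ‖b‖ := by
    intro a b B h
    have := Convex.norm_image_sub_le_of_norm_hasFDerivWithin_le' (s := Metric.closedBall a ‖b‖)
      (f := f) (f' := fderiv ℝ f) (φ := fderiv ℝ f a) (C := B) (x := a) (y := a + b)
      (fun x _ => ((hc.differentiable one_ne_zero) x).hasFDerivAt.hasFDerivWithinAt) h
      (convex_closedBall _ _) (Metric.mem_closedBall_self (norm_nonneg _)) (by simp)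
    simpa using this
  have hpow : ∀ (s : ℝ), 0 ≤ s → ∀ b : ℂ, ‖b‖ ^ s * ‖b‖ = ‖b‖ ^ (s + 1) := by
    intro s hs b
    rw [Real.rpow_add_of_nonneg (norm_nonneg _) hs zero_le_one, Real.rpow_one]
  refine ⟨|C| * (2 ^ |p - 2| + 1), by positivity, fun h2 a b => ?_, fun h2 a b => ?_⟩
  · refine (mv a b (|C| * ‖b‖ ^ (p - 1)) (fun z hz => ?_)).trans ?_
    · have hz' : ‖z - a‖ ≤ ‖b‖ := by simpa [dist_eq_norm] using hz
      refine (hC1 h2 z a).trans ?_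
      have := Real.rpow_le_rpow (norm_nonneg _) hz' (by linarith : 0 ≤ p - 1)
      have hn : 0 ≤ ‖z - a‖ ^ (p - 1) := by positivity
      exact mul_le_mul (le_abs_self C) this hn (abs_nonneg C)
    · rw [mul_assoc, hpow _ (by linarith), show p - 1 + 1 = p by ring]
      have h1 : (0:ℝ) ≤ 2 ^ |p - 2| := by positivity
      have : 0 ≤ |C| * ‖b‖ ^ p := by positivity
      nlinarith
  · rw [abs_of_pos (by linarith : 0 < p - 2)]
    set s := p - 2 with hs
    have hs0 : 0 < s := by linarith
    set W : ℝ := ‖a‖ ^ s + ‖b‖ ^ s with hW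
    refine (mv a b (|C| * ((2 ^ s + 1) * W) * ‖b‖) (fun z hz => ?_)).trans ?_
    · have hz' : ‖z - a‖ ≤ ‖b‖ := by simpa [dist_eq_norm] using hz
      refine (hC2 h2 z a).trans ?_
      have hza : ‖z‖ ≤ ‖a‖ + ‖b‖ := by
        calc ‖z‖ = ‖a + (z - a)‖ := by ring_nf
          _ ≤ _ := (norm_add_le _ _).trans (by linarith)
      have hmax : ‖z‖ ^ s ≤ 2 ^ s * W := by
        rcases le_total ‖a‖ ‖b‖ with hab | hab
        · have h3 : ‖z‖ ^ s ≤ (2 * ‖b‖) ^ s :=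
            Real.rpow_le_rpow (norm_nonneg _) (by linarith) hs0.le
          rw [Real.mul_rpow (by norm_num) (norm_nonneg _)] at h3
          refine h3.trans ?_
          gcongr
          have : 0 ≤ ‖a‖ ^ s := by positivity
          linarith
        · have h3 : ‖z‖ ^ s ≤ (2 * ‖a‖) ^ s :=
            Real.rpow_le_rpow (norm_nonneg _) (by linarith) hs0.le
          rw [Real.mul_rpow (by norm_num) (norm_nonneg _)] at h3
          refine h3.trans ?_
          gcongr
          have : 0 ≤ ‖b‖ ^ s := by positivity
          linarith
      have haW : ‖a‖ ^ s ≤ W := by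
        have : 0 ≤ ‖b‖ ^ s := by positivity
        linarith
      have : ‖z‖ ^ s + ‖a‖ ^ s ≤ (2 ^ s + 1) * W := by linarith
      have hn : 0 ≤ ‖z‖ ^ s + ‖a‖ ^ s := by positivity
      refine mul_le_mul (mul_le_mul (le_abs_self C) this hn (abs_nonneg C)) hz' (norm_nonneg _) (by positivity)
    · apply le_of_eq
      have e1 : ‖b‖ ^ p = ‖b‖ ^ s * ‖b‖ * ‖b‖ := by
        rw [hpow _ hs0.le, hpow _ (by linarith)]
        congr 1; rw [hs]; ring
      rw [e1, hW, Real.rpow_two]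
      ring

theorem conj_exp (p : ℝ) (hp : 1 < p) (r' : ℝ≥0∞)
    (hr : 1 / ENNReal.ofReal (p + 1) + 1 / r' = 1) : r' = ENNReal.ofReal ((p + 1) / p) := by
  have h1 : 1 / ENNReal.ofReal (p + 1) = ENNReal.ofReal (1 / (p + 1)) := by
    rw [ENNReal.ofReal_div_of_pos (by linarith), ENNReal.ofReal_one]
  have h2 : (1 : ℝ≥0∞) = ENNReal.ofReal (1 / (p + 1)) + ENNReal.ofReal (p / (p + 1)) := by
    rw [← ENNReal.ofReal_add (by positivity) (by positivity), ← add_div, add_comm 1 p,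
      div_self (by linarith), ENNReal.ofReal_one]
  rw [h1] at hr
  have h3 : 1 / r' = ENNReal.ofReal (p / (p + 1)) := by
    exact (ENNReal.add_right_inj ENNReal.ofReal_ne_top).1 (hr.trans h2)
  rw [one_div] at h3
  rw [← inv_inv r', h3, ← ENNReal.ofReal_inv_of_pos (by positivity), inv_div]

theorem space_bound {N : ℕ} (hN : 1 ≤ N) (p : ℝ) (hsub : Subcrit N p) (f : ℂ → ℂ)
    (hf : H1bound p f) (φ : Rn N → ℂ) (hφ : MemSobolev 1 φ) (r' : ℝ≥0∞)
    (hr : 1 / ENNReal.ofReal (p + 1) + 1 / r' = 1) : ∃ C : ℝ≥0∞, C ≠ ∞ ∧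
    ∀ u : Rn N → ℂ, MemSobolev 2 u →
      eLpNorm (hfun f φ u) r' volume ≤ C * (sobNorm 2 u ^ (2:ℝ) + sobNorm 2 u ^ p) := by
  obtain ⟨hp, hs3⟩ := hsub
  have hr'e := conj_exp p hp r' hr
  obtain ⟨K, hK⟩ := global_sob hN (p + 1).toNNReal
    (by rw [← NNReal.coe_le_coe, Real.coe_toNNReal _ (by linarith)]; push_cast; linarith)
    (by intro h; rw [Real.coe_toNNReal _ (by linarith)]; have := hs3 h; linarith)
  change ∀ u : Rn N → ℂ, ContDiff ℝ 1 u → eLpNorm u (ENNReal.ofReal (p + 1)) volume ≤ _ at hK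
  have hφ1 : ContDiff ℝ 1 φ := by exact_mod_cast hφ.1
  have hφT : eLpNorm φ (ENNReal.ofReal (p + 1)) volume ≠ ∞ := by
    refine ne_top_of_le_ne_top ?_ (hK φ hφ1)
    have a0 := (hφ.2 0 (by norm_num)).2.ne
    have a1 := (hφ.2 1 le_rfl).2.ne
    rw [eLpNorm_congr_norm_ae (g := φ) (Filter.Eventually.of_forall fun x => by simp)] at a0
    rw [eLpNorm_congr_norm_ae (g := fderiv ℝ φ)
      (Filter.Eventually.of_forall fun x => norm_iteratedFDeriv_one φ)] at a1
    exact ENNReal.mul_ne_top ENNReal.coe_ne_top (ENNReal.add_ne_top.2 ⟨a0, a1⟩)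
  have hKs : ∀ u : Rn N → ℂ, MemSobolev 2 u →
      eLpNorm u (ENNReal.ofReal (p + 1)) volume ≤ K * sobNorm 2 u := by
    intro u hu
    have hu1 : ContDiff ℝ 1 u := by
      refine ContDiff.of_le (n := 2) ?_ (by norm_num)
      exact_mod_cast hu.1
    refine (hK u hu1).trans ?_
    gcongr
    rw [sobNorm, Finset.sum_range_succ, Finset.sum_range_succ, Finset.sum_range_one]
    rw [eLpNorm_congr_norm_ae (f := iteratedFDeriv ℝ 0 u) (g := u)
      (Filter.Eventually.of_forall fun x => by simp)]
    rw [eLpNorm_congr_norm_ae (f := iteratedFDeriv ℝ 1 u) (g := fderiv ℝ u)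
      (Filter.Eventually.of_forall fun x => norm_iteratedFDeriv_one u)]
    exact le_self_add
  obtain ⟨C, hC0, hC1, hC2⟩ := pw_bound p hp f hf
  have hnorm : ∀ u : Rn N → ℂ, ∀ x, ‖hfun f φ u x‖ = ‖f (φ x + u x) - f (φ x) - fderiv ℝ f (φ x) (u x)‖ := by
    intro u x
    simp [hfun]
  have hpowterm : ∀ u : Rn N → ℂ, eLpNorm (fun x => ‖u x‖ ^ p) r' volume =
      eLpNorm u (ENNReal.ofReal (p + 1)) volume ^ p := by
    intro u
    rw [eLpNorm_norm_rpow u (by linarith), hr'e, ← ENNReal.ofReal_mul (by positivity),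
      div_mul_cancel₀ _ (by linarith)]
  have h1r : 1 ≤ r' := by
    rw [hr'e, ENNReal.one_le_ofReal, le_div_iff₀ (by linarith)]; linarith
  have hKp : (K:ℝ≥0∞) ^ p ≠ ∞ := ENNReal.rpow_ne_top_of_nonneg (by linarith) ENNReal.coe_ne_top
  rcases le_or_gt p 2 with h2 | h2
  · refine ⟨ENNReal.ofReal C * (K:ℝ≥0∞) ^ p, ENNReal.mul_ne_top ENNReal.ofReal_ne_top hKp, fun u hu => ?_⟩
    have hb : eLpNorm (hfun f φ u) r' volume ≤ eLpNorm (fun x => C * ‖u x‖ ^ p) r' volume :=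
      eLpNorm_mono_real fun x => by rw [hnorm]; exact hC1 h2 _ _
    refine hb.trans ?_
    have e := eLpNorm_const_smul C (fun x => ‖u x‖ ^ p) r' (volume : Measure (Rn N))
    change eLpNorm (fun x => C * ‖u x‖ ^ p) r' volume = _ at e
    rw [e, hpowterm, mul_assoc, Real.enorm_of_nonneg hC0]
    gcongr
    refine (ENNReal.rpow_le_rpow (hKs u hu) (by linarith)).trans ?_
    rw [ENNReal.mul_rpow_of_nonneg _ _ (by linarith)]
    gcongr
    exact le_add_self
  · set P := eLpNorm φ (ENNReal.ofReal (p + 1)) volume ^ (p - 2) with hP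
    have hPT : P ≠ ∞ := ENNReal.rpow_ne_top_of_nonneg (by linarith) hφT
    have hK2 : (K:ℝ≥0∞) ^ (2:ℝ) ≠ ∞ := ENNReal.rpow_ne_top_of_nonneg (by norm_num) ENNReal.coe_ne_top
    refine ⟨ENNReal.ofReal C * (P * (K:ℝ≥0∞) ^ (2:ℝ) + (K:ℝ≥0∞) ^ p),
      ENNReal.mul_ne_top ENNReal.ofReal_ne_top
        (ENNReal.add_ne_top.2 ⟨ENNReal.mul_ne_top hPT hK2, hKp⟩), fun u hu => ?_⟩
    have huc : Continuous u := hu.1.continuous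
    have hφc : Continuous φ := hφ1.continuous
    have hb : eLpNorm (hfun f φ u) r' volume ≤
        eLpNorm (fun x => C * (‖φ x‖ ^ (p - 2) * ‖u x‖ ^ (2:ℝ) + ‖u x‖ ^ p)) r' volume :=
      eLpNorm_mono_real fun x => by rw [hnorm]; exact hC2 h2 _ _
    refine hb.trans ?_
    have e := eLpNorm_const_smul C (fun x => ‖φ x‖ ^ (p - 2) * ‖u x‖ ^ (2:ℝ) + ‖u x‖ ^ p) r' (volume : Measure (Rn N))
    change eLpNorm (fun x => C * (‖φ x‖ ^ (p - 2) * ‖u x‖ ^ (2:ℝ) + ‖u x‖ ^ p)) r' volume = _ at e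
    rw [e, mul_assoc, Real.enorm_of_nonneg hC0]
    refine mul_le_mul_right ?_ _
    have hc1 : Continuous fun x => ‖φ x‖ ^ (p - 2) :=
      hφc.norm.rpow_const fun x => Or.inr (by linarith)
    have hc2 : Continuous fun x => ‖u x‖ ^ (2:ℝ) :=
      huc.norm.rpow_const fun x => Or.inr (by norm_num)
    have hc3 : Continuous fun x => ‖u x‖ ^ p :=
      huc.norm.rpow_const fun x => Or.inr (by linarith)
    have hadd := eLpNorm_add_le (μ := (volume : Measure (Rn N)))
      (hc1.mul hc2).aestronglyMeasurable hc3.aestronglyMeasurable h1r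
    refine hadd.trans ?_
    have hold : eLpNorm (fun x => ‖φ x‖ ^ (p - 2) * ‖u x‖ ^ (2:ℝ)) r' volume ≤
        P * eLpNorm u (ENNReal.ofReal (p + 1)) volume ^ (2:ℝ) := by
      have : ENNReal.HolderTriple (ENNReal.ofReal ((p + 1) / (p - 2))) (ENNReal.ofReal ((p + 1) / 2)) r' := by
        constructor
        rw [hr'e, ← ENNReal.ofReal_inv_of_pos (div_pos (by linarith) (by linarith)),
          ← ENNReal.ofReal_inv_of_pos (by positivity), ← ENNReal.ofReal_inv_of_pos (by positivity),
          ← ENNReal.ofReal_add (inv_nonneg.2 (div_pos (by linarith) (by linarith)).le) (by positivity)]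
        congr 1
        simp only [inv_div]
        ring
      have := eLpNorm_smul_le_mul_eLpNorm (μ := (volume : Measure (Rn N)))
        (p := ENNReal.ofReal ((p + 1) / (p - 2))) (q := ENNReal.ofReal ((p + 1) / 2)) (r := r')
        (f := fun x => ‖u x‖ ^ (2:ℝ)) hc2.aestronglyMeasurable
        (φ := fun x => ‖φ x‖ ^ (p - 2)) hc1.aestronglyMeasurable
      refine this.trans (le_of_eq ?_)
      rw [eLpNorm_norm_rpow u (by norm_num), eLpNorm_norm_rpow φ (by linarith),
        ← ENNReal.ofReal_mul (by positivity), ← ENNReal.ofReal_mul (div_pos (by linarith) (by linarith)).le,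
        div_mul_cancel₀ (p + 1) (sub_pos.2 h2).ne', div_mul_cancel₀ (p + 1) two_ne_zero]
    have t1 : eLpNorm (fun x => ‖φ x‖ ^ (p - 2) * ‖u x‖ ^ (2:ℝ)) r' volume ≤
        P * (K:ℝ≥0∞) ^ (2:ℝ) * sobNorm 2 u ^ (2:ℝ) := by
      refine hold.trans ?_
      rw [mul_assoc, ← ENNReal.mul_rpow_of_nonneg _ _ (by norm_num)]
      refine mul_le_mul_right ?_ _
      exact ENNReal.rpow_le_rpow (hKs u hu) (by norm_num)
    have t2 : eLpNorm (fun x => ‖u x‖ ^ p) r' volume ≤ (K:ℝ≥0∞) ^ p * sobNorm 2 u ^ p := by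
      rw [hpowterm, ← ENNReal.mul_rpow_of_nonneg _ _ (by linarith)]
      exact ENNReal.rpow_le_rpow (hKs u hu) (by linarith)
    refine (add_le_add t1 t2).trans ?_
    rw [mul_add]
    gcongr
    · exact le_self_add
    · exact le_add_self

theorem one_estimate {N : ℕ} (hN : 1 ≤ N) (p : ℝ) (hsub : Subcrit N p) (f : ℂ → ℂ)
    (hf : H1bound p f) (φ : Rn N → ℂ) (hφ : MemSobolev 1 φ) (q q' r' : ℝ≥0∞)
    (hq : 1 / q + 1 / q' = 1)
    (hr : 1 / ENNReal.ofReal (p + 1) + 1 / r' = 1) (lam μ κ : ℝ) (hκ : 0 < κ)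
    (h2 : κ ≤ 2 * lam - μ) (hp : κ ≤ p * lam - μ) : ∃ C : ℝ≥0∞, C ≠ ∞ ∧
    ∀ (v : ℝ → Rn N → ℂ) (T : ℝ), 0 < T → (∀ t, MemSobolev 2 (v t)) →
      wNorm q' r' μ T (fun t => hfun f φ (v t)) ≤
        C * (wNormH2 lam T v ^ (2:ℝ) + wNormH2 lam T v ^ p) := by
  obtain ⟨C1, hC1, hsp⟩ := space_bound hN p hsub f hf φ hφ r' hr
  have hp1 := hsub.1
  have hq1 : 1 ≤ q' := by
    have : 1 / q' ≤ 1 := by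
      calc 1 / q' ≤ 1 / q + 1 / q' := le_add_self
        _ = 1 := hq
    rw [one_div] at this
    exact ENNReal.inv_le_one.1 this
  obtain ⟨C2, hC2, htm⟩ := time_bound κ hκ q' hq1
  refine ⟨C2 * C1, ENNReal.mul_ne_top hC2 hC1, fun v T hT hv => ?_⟩
  set m := essSup (fun t => ENNReal.ofReal (Real.exp (-(lam * t))) * sobNorm 2 (v t))
      (volume.restrict (Set.Ioo 0 T)) with hm
  have hW : wNormH2 lam T v = ENNReal.ofReal (Real.exp (lam * T)) * m := rfl
  let A : ℝ → ℝ≥0∞ := fun s => m ^ s * ENNReal.ofReal (Real.exp ((s * lam - μ) * T))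
  have hexp : ∀ a b : ℝ, ENNReal.ofReal (Real.exp a) * ENNReal.ofReal (Real.exp b) =
      ENNReal.ofReal (Real.exp (a + b)) := by
    intro a b
    rw [← ENNReal.ofReal_mul (Real.exp_pos _).le, Real.exp_add]
  have hexpp : ∀ a s : ℝ, 0 ≤ s → ENNReal.ofReal (Real.exp a) ^ s =
      ENNReal.ofReal (Real.exp (s * a)) := by
    intro a s hs
    rw [ENNReal.ofReal_rpow_of_nonneg (Real.exp_pos _).le hs, ← Real.exp_mul, mul_comm]
  have hkey := htm T (fun t => ENNReal.ofReal (Real.exp (-(μ * t))) * eLpNorm (hfun f φ (v t)) r' volume)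
    (C1 * (A 2 + A p)) ?_
  · have : wNorm q' r' μ T (fun t => hfun f φ (v t)) ≤
        ENNReal.ofReal (Real.exp (μ * T)) * (C2 * (C1 * (A 2 + A p))) := by
      rw [wNorm]
      exact mul_le_mul_right hkey _
    refine this.trans (le_of_eq ?_)
    have hA : ∀ s : ℝ, 0 ≤ s → ENNReal.ofReal (Real.exp (μ * T)) * A s = wNormH2 lam T v ^ s := by
      intro s hs
      rw [hW, ENNReal.mul_rpow_of_nonneg _ _ hs, hexpp _ _ hs]
      change _ * (m ^ s * _) = _
      rw [mul_left_comm, hexp, mul_comm]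
      congr 3
      ring
    rw [← hA 2 (by norm_num), ← hA p (by linarith)]
    ring
  · filter_upwards [ENNReal.ae_le_essSup (μ := volume.restrict (Set.Ioo 0 T))
      (fun t => ENNReal.ofReal (Real.exp (-(lam * t))) * sobNorm 2 (v t)),
      ae_restrict_mem measurableSet_Ioo] with t ht hmem
    rw [← hm] at ht
    have hE : sobNorm 2 (v t) ≤ ENNReal.ofReal (Real.exp (lam * t)) * m := by
      calc sobNorm 2 (v t) = ENNReal.ofReal (Real.exp (lam * t)) *
            (ENNReal.ofReal (Real.exp (-(lam * t))) * sobNorm 2 (v t)) := by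
            rw [← mul_assoc, hexp]; simp
        _ ≤ _ := mul_le_mul_right ht _
    have hs : ∀ s : ℝ, 0 ≤ s → κ ≤ s * lam - μ →
        ENNReal.ofReal (Real.exp (-(μ * t))) * sobNorm 2 (v t) ^ s ≤
        A s * ENNReal.ofReal (Real.exp (κ * (t - T))) := by
      intro s hs0 hsκ
      calc ENNReal.ofReal (Real.exp (-(μ * t))) * sobNorm 2 (v t) ^ s
          ≤ ENNReal.ofReal (Real.exp (-(μ * t))) * (ENNReal.ofReal (Real.exp (lam * t)) * m) ^ s :=
            mul_le_mul_right (ENNReal.rpow_le_rpow hE hs0) _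
        _ = m ^ s * ENNReal.ofReal (Real.exp (-(μ * t) + s * (lam * t))) := by
            rw [ENNReal.mul_rpow_of_nonneg _ _ hs0, hexpp _ _ hs0, ← mul_assoc, hexp, mul_comm]
        _ ≤ m ^ s * ENNReal.ofReal (Real.exp ((s * lam - μ) * T + κ * (t - T))) := by
            refine mul_le_mul_right (ENNReal.ofReal_le_ofReal (Real.exp_le_exp.2 ?_)) _
            have : t ≤ T := hmem.2.le
            nlinarith
        _ = _ := by
            rw [← hexp, ← mul_assoc]
    calc ENNReal.ofReal (Real.exp (-(μ * t))) * eLpNorm (hfun f φ (v t)) r' volume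
        ≤ ENNReal.ofReal (Real.exp (-(μ * t))) * (C1 * (sobNorm 2 (v t) ^ (2:ℝ) + sobNorm 2 (v t) ^ p)) :=
          mul_le_mul_right (hsp _ (hv t)) _
      _ = C1 * (ENNReal.ofReal (Real.exp (-(μ * t))) * sobNorm 2 (v t) ^ (2:ℝ) +
          ENNReal.ofReal (Real.exp (-(μ * t))) * sobNorm 2 (v t) ^ p) := by ring
      _ ≤ C1 * (A 2 * ENNReal.ofReal (Real.exp (κ * (t - T))) + A p * ENNReal.ofReal (Real.exp (κ * (t - T)))) :=
          mul_le_mul_right (add_le_add (hs 2 (by norm_num) h2) (hs p (by linarith) hp)) _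
      _ = _ := by ring


/-- Lemma 3.4: ‖h_j(v)‖_{L^{q_j',μ}_T L^{r_j'}} ≤ C(‖v‖_{X_T}² + ‖v‖_{X_T}^{r_j-1}). -/
theorem weighted_nonlinear_estimate
    {N : ℕ} (hN : 1 ≤ N) (g : ℝ → ℝ) (f₁ f₂ : ℂ → ℂ) (p₁ p₂ ω : ℝ)
    (φ : Rn N → ℂ)
    (h1 : H1full N g f₁ f₂ p₁ p₂) (h2 : H2hyp ω g φ) (h3 : H3hyp g ω φ)
    (lamstar : ℂ) (hstar : 0 < lamstar.re ∧ IsEigen g ω φ lamstar)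
    (hmax : ∀ z : ℂ, IsEigen g ω φ z → z.re ≤ lamstar.re)
    (ν lam μ : ℝ)
    (hchain : 0 < lam ∧ lam < lamstar.re ∧ lamstar.re < ν ∧ ν < μ ∧
      μ < (1 + alphaConst (p₁ + 1) (p₂ + 1)) * lam)
    (q₁ q₂ q₁' r₁' q₂' r₂' : ℝ≥0∞)
    (hadm1 : Admissible N q₁ (ENNReal.ofReal (p₁ + 1)))
    (hadm2 : Admissible N q₂ (ENNReal.ofReal (p₂ + 1)))
    (hq₁' : 1 / q₁ + 1 / q₁' = 1) (hr₁' : 1 / ENNReal.ofReal (p₁ + 1) + 1 / r₁' = 1)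
    (hq₂' : 1 / q₂ + 1 / q₂' = 1) (hr₂' : 1 / ENNReal.ofReal (p₂ + 1) + 1 / r₂' = 1) :
    ∃ C : ℝ, 0 < C ∧
      ∀ (v : ℝ → Rn N → ℂ) (T : ℝ), 0 < T → (∀ t, MemSobolev 2 (v t)) →
        (wNorm q₁' r₁' μ T (fun t => hfun f₁ φ (v t)) ≤
          ENNReal.ofReal C *
            (XNorm q₁ (ENNReal.ofReal (p₁ + 1)) q₂ (ENNReal.ofReal (p₂ + 1)) lam T v
                ^ (2 : ℝ) +
              XNorm q₁ (ENNReal.ofReal (p₁ + 1)) q₂ (ENNReal.ofReal (p₂ + 1)) lam T v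
                ^ (p₁ + 1 - 1))) ∧
        (wNorm q₂' r₂' μ T (fun t => hfun f₂ φ (v t)) ≤
          ENNReal.ofReal C *
            (XNorm q₁ (ENNReal.ofReal (p₁ + 1)) q₂ (ENNReal.ofReal (p₂ + 1)) lam T v
                ^ (2 : ℝ) +
              XNorm q₁ (ENNReal.ofReal (p₁ + 1)) q₂ (ENNReal.ofReal (p₂ + 1)) lam T v
                ^ (p₂ + 1 - 1))) := by
  obtain ⟨hl, h12, h23, h34, h45⟩ := hchain
  set α := alphaConst (p₁ + 1) (p₂ + 1) with hα
  have ha1 : α ≤ 1 := min_le_left _ _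
  have ha2 : α ≤ p₁ + 1 - 2 := (min_le_right _ _).trans (min_le_left _ _)
  have ha3 : α ≤ p₂ + 1 - 2 := (min_le_right _ _).trans (min_le_right _ _)
  have hκ : 0 < (1 + α) * lam - μ := by linarith
  obtain ⟨C1, hC1, hb1⟩ := one_estimate hN p₁ h1.sub1 f₁ h1.bd1 φ h2.2.2.1 q₁ q₁' r₁' hq₁' hr₁'
    lam μ ((1 + α) * lam - μ) hκ (by nlinarith) (by nlinarith)
  obtain ⟨C2, hC2, hb2⟩ := one_estimate hN p₂ h1.sub2 f₂ h1.bd2 φ h2.2.2.1 q₂ q₂' r₂' hq₂' hr₂'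
    lam μ ((1 + α) * lam - μ) hκ (by nlinarith) (by nlinarith)
  have hp1 := h1.sub1.1
  have hp2 := h1.sub2.1
  refine ⟨C1.toReal + C2.toReal + 1, by positivity, fun v T hT hv => ?_⟩
  have hX : wNormH2 lam T v ≤
      XNorm q₁ (ENNReal.ofReal (p₁ + 1)) q₂ (ENNReal.ofReal (p₂ + 1)) lam T v := by
    rw [XNorm, add_assoc]
    exact le_self_add
  have hCC1 : C1 ≤ ENNReal.ofReal (C1.toReal + C2.toReal + 1) := by
    rw [ENNReal.le_ofReal_iff_toReal_le hC1 (by positivity)]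
    have := C2.toReal_nonneg
    linarith
  have hCC2 : C2 ≤ ENNReal.ofReal (C1.toReal + C2.toReal + 1) := by
    rw [ENNReal.le_ofReal_iff_toReal_le hC2 (by positivity)]
    have := C1.toReal_nonneg
    linarith
  rw [add_sub_cancel_right, add_sub_cancel_right]
  constructor
  · refine (hb1 v T hT hv).trans (mul_le_mul' hCC1 (add_le_add ?_ ?_))
    · exact ENNReal.rpow_le_rpow hX (by norm_num)
    · exact ENNReal.rpow_le_rpow hX (by linarith)
  · refine (hb2 v T hT hv).trans (mul_le_mul' hCC2 (add_le_add ?_ ?_))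
    · exact ENNReal.rpow_le_rpow hX (by norm_num)
    · exact ENNReal.rpow_le_rpow hX (by linarith)

end
end

section
/- Assume (H1)–(H3), fix λ, μ with 0 < λ < Re λ* < ν < μ < (1+α)λ (α = min{1, r₁-2, r₂-2}), and set h_j(v) = J[f_j(φ+v) - f_j(φ) - Df_j(φ)v]. Then for j = 1,2 there exists a constant C independent of v and T such that for every sufficiently regular v, ‖∂_t h_j(v)‖_{L^{q_j',μ}_T L^{r_j'}} ≤ C( ‖v‖_{X_T}² + ‖v‖_{X_T}^{r_j-1} ), where ∂_t h_j(v(t)) = J[Df_j(φ+v(t)) - Df_j(φ)]∂_t v(t). -/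
open MeasureTheory ENNReal

noncomputable section

lemma aux_interp {α : Type} [MeasurableSpace α] {ν : Measure α} (u : α → ℂ)
    (hu : AEStronglyMeasurable u ν) (a b : ℝ) (ha : 0 < a) (hb : 0 < b) (hab : a + b = 1)
    (P Q R : ℝ≥0∞) [HolderTriple P Q R] :
    eLpNorm u R ν ≤ eLpNorm u (P * ENNReal.ofReal a) ν ^ a *
      eLpNorm u (Q * ENNReal.ofReal b) ν ^ b := by
  rw [← eLpNorm_norm_rpow u ha, ← eLpNorm_norm_rpow u hb]
  have h1 : AEStronglyMeasurable (fun x => ‖u x‖ ^ a) ν :=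
    (hu.norm.aemeasurable.pow_const a).aestronglyMeasurable
  have h2 : AEStronglyMeasurable (fun x => ‖u x‖ ^ b) ν :=
    (hu.norm.aemeasurable.pow_const b).aestronglyMeasurable
  have := eLpNorm_smul_le_mul_eLpNorm (p := P) (q := Q) (r := R) h2 h1
  refine le_trans (le_of_eq ?_) this
  rw [← eLpNorm_norm]
  congr 1
  ext x
  simp only [Pi.smul_apply', smul_eq_mul]
  rw [← Real.rpow_add_of_nonneg (norm_nonneg _) ha.le hb.le, hab, Real.rpow_one]

lemma aux_interp_fin {α : Type} [MeasurableSpace α] {ν : Measure α} (r m : ℝ)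
    (hr : 2 < r) (hm : r < m) : ∃ b : ℝ, 0 ≤ b ∧ ∀ (u : α → ℂ), 
    AEStronglyMeasurable u ν → ∀ (K S : ℝ≥0∞), eLpNorm u 2 ν ≤ S → 
      eLpNorm u (ENNReal.ofReal m) ν ≤ K * S → 
      eLpNorm u (ENNReal.ofReal r) ν ≤ K ^ b * S := by
  have h0 : 0 < 1 / r - 1 / m := by
    rw [sub_pos]; exact one_div_lt_one_div_of_lt (by linarith) hm
  have h1 : 0 < 1 / 2 - 1 / m := by
    rw [sub_pos]; exact one_div_lt_one_div_of_lt (by linarith) (by linarith)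
  have h2 : 0 < 1 / 2 - 1 / r := by
    rw [sub_pos]; exact one_div_lt_one_div_of_lt (by linarith) (by linarith)
  set a := (1 / r - 1 / m) / (1 / 2 - 1 / m) with ha
  set b := (1 / 2 - 1 / r) / (1 / 2 - 1 / m) with hb
  have ha0 : 0 < a := div_pos h0 h1
  have hb0 : 0 < b := div_pos h2 h1
  have hab : a + b = 1 := by
    rw [ha, hb, ← add_div]; rw [div_eq_one_iff_eq h1.ne']; ring
  have hH : a / 2 + b / m = 1 / r := by
    have : a * (1 / 2 - 1 / m) = 1 / r - 1 / m := div_mul_cancel₀ _ h1.ne'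
    have h3 : b = 1 - a := by linarith
    rw [h3]
    have : a / 2 + (1 - a) / m = a * (1 / 2 - 1 / m) + 1 / m := by ring
    linarith
  have : HolderTriple (ENNReal.ofReal (2 / a)) (ENNReal.ofReal (m / b)) (ENNReal.ofReal r) := by
    refine ⟨?_⟩
    rw [← ENNReal.ofReal_inv_of_pos (by positivity), ← ENNReal.ofReal_inv_of_pos (by apply div_pos <;> linarith),
      ← ENNReal.ofReal_inv_of_pos (by linarith), ← ENNReal.ofReal_add]
    · congr 1
      rw [inv_div, inv_div, hH, one_div]
    · positivity
    · rw [inv_div]; apply div_nonneg <;> linarith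
  refine ⟨b, hb0.le, fun u hu K S h2 hm => ?_⟩
  refine (aux_interp u hu a b ha0 hb0 hab (ENNReal.ofReal (2 / a)) (ENNReal.ofReal (m / b)) _).trans ?_
  rw [← ENNReal.ofReal_mul (by positivity), ← ENNReal.ofReal_mul (by apply div_nonneg <;> linarith),
    div_mul_cancel₀ _ ha0.ne', div_mul_cancel₀ _ hb0.ne']
  have : ENNReal.ofReal 2 = 2 := by simp
  rw [this]
  calc _ ≤ S ^ a * (K * S) ^ b := by gcongr
    _ = K ^ b * S := by
      rw [ENNReal.mul_rpow_of_nonneg _ _ hb0.le, mul_left_comm, ← ENNReal.rpow_add_of_nonneg _ _ ha0.le hb0.le,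
        hab, ENNReal.rpow_one]

lemma aux_interp_top {α : Type} [MeasurableSpace α] {ν : Measure α} (r : ℝ)
    (hr : 2 < r) : ∃ b : ℝ, 0 ≤ b ∧ ∀ (u : α → ℂ), 
    AEStronglyMeasurable u ν → ∀ (K S : ℝ≥0∞), eLpNorm u 2 ν ≤ S → 
      eLpNorm u ∞ ν ≤ K * S → 
      eLpNorm u (ENNReal.ofReal r) ν ≤ K ^ b * S := by
  set a := 2 / r with ha
  set b := 1 - a with hb
  have ha0 : 0 < a := by positivity
  have hb0 : 0 < b := by rw [hb, ha, sub_pos, div_lt_one (by linarith)]; exact hr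
  have hab : a + b = 1 := by linarith
  refine ⟨b, hb0.le, fun u hu K S h2 hm => ?_⟩
  refine (aux_interp u hu a b ha0 hb0 hab (ENNReal.ofReal r) ∞ _).trans ?_
  rw [← ENNReal.ofReal_mul (by linarith), ENNReal.top_mul (by simpa using hb0)]
  have : ENNReal.ofReal (r * a) = 2 := by
    rw [ha, mul_div_cancel₀ _ (by linarith)]; simp
  rw [this]
  calc _ ≤ S ^ a * (K * S) ^ b := by gcongr
    _ = K ^ b * S := by
      rw [ENNReal.mul_rpow_of_nonneg _ _ hb0.le, mul_left_comm, ← ENNReal.rpow_add_of_nonneg _ _ ha0.le hb0.le,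
        hab, ENNReal.rpow_one]

lemma aux_sq {N : ℕ} (u : Rn N → ℂ) (hu : ContDiff ℝ 1 u) (P R : ℝ≥0∞) [HolderTriple P 2 R] :
    eLpNorm (fderiv ℝ (fun x => u x ^ 2)) R volume ≤
      2 * eLpNorm u P volume * eLpNorm (fderiv ℝ u) 2 volume := by
  have hd : Continuous (fderiv ℝ u) := hu.continuous_fderiv (by norm_num)
  have := eLpNorm_le_eLpNorm_mul_eLpNorm_of_nnnorm (p := P) (q := 2) (r := R) (μ := (volume : Measure (Rn N)))
    hu.continuous.aestronglyMeasurable hd.aestronglyMeasurable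
    (fun z L => (2 * z) • L) 2 (Filter.Eventually.of_forall fun x => by
      simp [nnnorm_smul])
  refine le_trans (le_of_eq ?_) this
  congr 1
  ext1 x
  have := ((hu.differentiable (by norm_num)) x).hasFDerivAt.pow 2
  rw [this.fderiv]
  ext y
  simp

lemma aux_sqnorm {N : ℕ} (u : Rn N → ℂ) (P : ℝ≥0∞) :
    eLpNorm (fun x => u x ^ 2) P volume = eLpNorm u (P * 2) volume ^ (2:ℝ) := by
  have := eLpNorm_norm_rpow (μ := (volume : Measure (Rn N))) (p := P) u (q := 2) (by norm_num)
  rw [← eLpNorm_norm]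
  simpa using this

lemma aux_sqrt {A S K : ℝ≥0∞} (h : A ^ (2:ℝ) ≤ K * S * S) : A ≤ K ^ (1/2:ℝ) * S := by
  have : (A ^ (2:ℝ)) ^ (1/2:ℝ) ≤ (K * S * S) ^ (1/2:ℝ) := by gcongr
  rw [← ENNReal.rpow_mul, mul_assoc, ENNReal.mul_rpow_of_nonneg _ _ (by norm_num), ← sq, 
    ← ENNReal.rpow_natCast, ← ENNReal.rpow_mul] at this
  norm_num at this
  simpa using this

lemma aux_sob_ge3 {N : ℕ} (hN : 3 ≤ N) (r : ℝ) (hr : 2 < r) (hr2 : r < 2 * (N:ℝ) / (N - 2)) :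
    ∃ K : ℝ≥0∞, K ≠ ∞ ∧ ∀ u : Rn N → ℂ, ContDiff ℝ 1 u → HasCompactSupport u →
      eLpNorm u (ENNReal.ofReal r) volume ≤ K * (eLpNorm u 2 volume + eLpNorm (fderiv ℝ u) 2 volume) := by
  have hN' : (3:ℝ) ≤ N := by exact_mod_cast hN
  obtain ⟨b, hb, H⟩ := aux_interp_fin (ν := (volume : Measure (Rn N))) r _ hr hr2
  refine ⟨(SNormLESNormFDerivOfEqConst ℂ (volume : Measure (Rn N)) (2 : NNReal) : ℝ≥0∞) ^ b,
    ENNReal.rpow_ne_top_of_nonneg hb ENNReal.coe_ne_top, fun u hu hc => ?_⟩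
  refine H u hu.continuous.aestronglyMeasurable _ _ le_self_add ?_
  have := eLpNorm_le_eLpNorm_fderiv_of_eq (volume : Measure (Rn N)) hu hc (p := 2) (p' := (2 * (N:ℝ) / (N - 2)).toNNReal)
    (by norm_num) (by simp; omega) (by
      rw [Real.coe_toNNReal _ (by linarith)]
      simp
      field_simp)
  refine le_trans this ?_
  refine mul_le_mul_right ?_ _
  exact le_add_self (a := eLpNorm (fderiv ℝ u) 2 volume)

lemma aux_sob_2_pow (k : ℕ) :
    ∃ K : ℝ≥0∞, K ≠ ∞ ∧ ∀ u : Rn 2 → ℂ, ContDiff ℝ 1 u → HasCompactSupport u →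
      eLpNorm u (2 ^ (k+1) : ℝ≥0∞) volume ≤ K * (eLpNorm u 2 volume + eLpNorm (fderiv ℝ u) 2 volume) := by
  induction k with
  | zero => exact ⟨1, by simp, fun u hu hc => by simp⟩
  | succ k ih =>
    obtain ⟨K, hK, H⟩ := ih
    set rr : NNReal := 2 ^ (k+1) with hrr
    have hr2 : 2 ≤ rr := by
      rw [hrr, pow_succ]; exact le_mul_of_one_le_left (by norm_num) (one_le_pow₀ (by norm_num))
    have hr0 : 0 < rr := by positivity
    set p : NNReal := 2 * rr / (2 + rr) with hp
    have hp0 : 0 < p := by positivity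
    have hp1 : 1 ≤ p := by
      rw [hp, one_le_div (by positivity)]
      rw [two_mul]; gcongr
    have : HolderTriple (rr : ℝ≥0∞) 2 (p : ℝ≥0∞) := by
      refine ⟨?_⟩
      have : (2 : ℝ≥0∞) = ((2:NNReal) : ℝ≥0∞) := by simp
      rw [this, ← ENNReal.coe_inv hr0.ne', ← ENNReal.coe_inv (by norm_num), ← ENNReal.coe_inv hp0.ne', 
        ← ENNReal.coe_add]
      congr 1
      rw [hp]; field_simp
    set D := SNormLESNormFDerivOfEqConst ℂ (volume : Measure (Rn 2)) p
    refine ⟨((D : ℝ≥0∞) * 2 * K) ^ (1/2:ℝ), ENNReal.rpow_ne_top_of_nonneg (by norm_num)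
      (ENNReal.mul_ne_top (ENNReal.mul_ne_top ENNReal.coe_ne_top (by simp)) hK), fun u hu hc => ?_⟩
    apply aux_sqrt
    have h1 := eLpNorm_le_eLpNorm_fderiv_of_eq (volume : Measure (Rn 2)) (u := fun x => u x ^ 2)
      (hu.pow 2) (hc.comp_left (g := fun z => z ^ 2) (by simp)) (p := p) (p' := rr)
      hp1 (by simp) (by
        rw [hp]; simp; field_simp; ring)
    rw [aux_sqnorm] at h1
    have h2 := aux_sq u hu (rr : ℝ≥0∞) (p : ℝ≥0∞)
    have h3 := H u hu hc
    have e1 : (rr : ℝ≥0∞) = 2 ^ (k+1) := by rw [hrr]; simp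
    have e2 : (rr : ℝ≥0∞) * 2 = 2 ^ (k+1+1) := by rw [e1, pow_succ 2 (k+1)]
    rw [e2] at h1
    rw [e1] at h2
    refine h1.trans ?_
    set S := eLpNorm u 2 volume + eLpNorm (fderiv ℝ u) 2 volume
    have h4 : eLpNorm (fderiv ℝ u) 2 volume ≤ S := le_add_self
    calc _ ≤ (D : ℝ≥0∞) * (2 * (K * S) * S) := by
          gcongr
          exact h2.trans (by gcongr)
      _ = _ := by ring

lemma aux_sob_2 (r : ℝ) (hr : 2 < r) :
    ∃ K : ℝ≥0∞, K ≠ ∞ ∧ ∀ u : Rn 2 → ℂ, ContDiff ℝ 1 u → HasCompactSupport u →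
      eLpNorm u (ENNReal.ofReal r) volume ≤ K * (eLpNorm u 2 volume + eLpNorm (fderiv ℝ u) 2 volume) := by
  obtain ⟨k, hk⟩ := pow_unbounded_of_one_lt r (y := (2:ℝ)) (by norm_num)
  have hk' : r < 2 ^ (k+1) := hk.trans_le (pow_le_pow_right₀ (by norm_num) (by omega))
  obtain ⟨K, hK, HK⟩ := aux_sob_2_pow k
  obtain ⟨b, hb, H⟩ := aux_interp_fin (ν := (volume : Measure (Rn 2))) r _ hr hk'
  refine ⟨K ^ b, ENNReal.rpow_ne_top_of_nonneg hb hK, fun u hu hc => ?_⟩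
  refine H u hu.continuous.aestronglyMeasurable _ _ le_self_add ?_
  have := HK u hu hc
  rw [ENNReal.ofReal_pow (by norm_num)]
  simpa using this

lemma aux_sob_1 (r : ℝ) (hr : 2 < r) :
    ∃ K : ℝ≥0∞, K ≠ ∞ ∧ ∀ u : Rn 1 → ℂ, ContDiff ℝ 1 u → HasCompactSupport u →
      eLpNorm u (ENNReal.ofReal r) volume ≤ K * (eLpNorm u 2 volume + eLpNorm (fderiv ℝ u) 2 volume) := by
  obtain ⟨b, hb, H⟩ := aux_interp_top (ν := (volume : Measure (Rn 1))) r hr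
  refine ⟨((2 : ℝ≥0∞) ^ (1/2:ℝ)) ^ b, ENNReal.rpow_ne_top_of_nonneg hb (ENNReal.rpow_ne_top_of_nonneg (by norm_num) (by simp)), fun u hu hc => ?_⟩
  refine H u hu.continuous.aestronglyMeasurable _ _ le_self_add ?_
  set S := eLpNorm u 2 volume + eLpNorm (fderiv ℝ u) 2 volume
  apply aux_sqrt
  have h1 := aux_sqnorm u ∞
  rw [ENNReal.top_mul (by norm_num)] at h1
  rw [← h1]
  have h2 := aux_sq u hu 2 1
  have key : eLpNorm (fun x => u x ^ 2) ∞ volume ≤ eLpNorm (fderiv ℝ (fun x => u x ^ 2)) 1 volume := by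
    set w := fun x => u x ^ 2 with hw
    have hwc : ContDiff ℝ 1 w := hu.pow 2
    have hws : HasCompactSupport w := hc.comp_left (g := fun z => z ^ 2) (by simp)
    rw [eLpNorm_exponent_top]
    apply eLpNormEssSup_le_of_ae_enorm_bound
    refine Filter.Eventually.of_forall fun x => ?_
    rw [eLpNorm_one_eq_lintegral_enorm]
    let e : ℝ → Rn 1 := fun s => WithLp.toLp 2 (fun _ => s)
    have he : MeasurePreserving e volume volume :=
      ((EuclideanSpace.volume_preserving_symm_measurableEquiv_toLp (Fin 1)).symm).comp
       ((volume_preserving_funUnique (Fin 1) ℝ).symm)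
    have hx : x = e (x 0) := by
      ext i; fin_cases i; rfl
    let E : ℝ →L[ℝ] Rn 1 := ContinuousLinearMap.toSpanSingleton ℝ (EuclideanSpace.single 0 1)
    have hE : e = E := by
      ext s i; fin_cases i; simp [e, E]
    have hEc : Topology.IsClosedEmbedding e := by
      refine Isometry.isClosedEmbedding (Isometry.of_dist_eq fun s t => ?_)
      simp [EuclideanSpace.dist_eq, e]
    have hc1 : ContDiff ℝ 1 (w ∘ e) := by rw [hE]; exact hwc.comp E.contDiff
    have hs1 : HasCompactSupport (w ∘ e) := hws.comp_isClosedEmbedding hEc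
    have h5 := HasCompactSupport.enorm_le_lintegral_Ici_deriv hc1 hs1 (x 0)
    rw [hx]
    refine h5.trans ((setLIntegral_le_lintegral _ _).trans ?_)
    rw [← he.lintegral_comp_emb hEc.measurableEmbedding]
    refine lintegral_mono fun s => ?_
    have h6 : HasDerivAt (w ∘ e) (fderiv ℝ w (e s) (EuclideanSpace.single 0 1)) s := by
      have h7 := ((hwc.differentiable (by norm_num)) (e s)).hasFDerivAt.comp_hasDerivAt s (by rw [hE]; exact E.hasDerivAt)
      simpa [E] using h7
    rw [h6.deriv, enorm_eq_nnnorm, enorm_eq_nnnorm]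
    have := (fderiv ℝ w (e s)).le_opNNNorm (EuclideanSpace.single 0 1)
    simp at this
    exact ENNReal.coe_le_coe.2 this
  refine (key.trans h2).trans ?_
  have h4 : eLpNorm (fderiv ℝ u) 2 volume ≤ S := le_add_self
  have h5 : eLpNorm u 2 volume ≤ S := le_self_add
  gcongr

lemma aux_sob_cs {N : ℕ} (hN : 1 ≤ N) (r : ℝ) (hr : 2 < r)
    (hr2 : 3 ≤ N → r < 2 * (N:ℝ) / (N - 2)) :
    ∃ K : ℝ≥0∞, K ≠ ∞ ∧ ∀ u : Rn N → ℂ, ContDiff ℝ 1 u → HasCompactSupport u →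
      eLpNorm u (ENNReal.ofReal r) volume ≤ K * (eLpNorm u 2 volume + eLpNorm (fderiv ℝ u) 2 volume) := by
  rcases (by omega : N = 1 ∨ N = 2 ∨ 3 ≤ N) with rfl | rfl | h
  · exact aux_sob_1 r hr
  · exact aux_sob_2 r hr
  · exact aux_sob_ge3 h r hr (hr2 h)

set_option maxHeartbeats 2000000 in
lemma aux_sob {N : ℕ} (hN : 1 ≤ N) (r : ℝ) (hr : 2 < r)
    (hr2 : 3 ≤ N → r < 2 * (N:ℝ) / (N - 2)) :
    ∃ K : ℝ≥0∞, K ≠ ∞ ∧ ∀ u : Rn N → ℂ, ContDiff ℝ 1 u →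
      eLpNorm u (ENNReal.ofReal r) volume ≤ K * (eLpNorm u 2 volume + eLpNorm (fderiv ℝ u) 2 volume) := by
  obtain ⟨K, hK, H⟩ := aux_sob_cs hN r hr hr2
  let χ : ContDiffBump (0 : Rn N) := ⟨1, 2, by norm_num, by norm_num⟩
  have hχ : ContDiff ℝ 1 (χ : Rn N → ℝ) := χ.contDiff
  obtain ⟨B, hB⟩ := (hχ.continuous_fderiv (by norm_num)).bounded_above_of_compact_support
    (χ.hasCompactSupport.fderiv ℝ)
  have hB0 : 0 ≤ B := (norm_nonneg _).trans (hB 0)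
  refine ⟨K * (1 + ENNReal.ofReal B), by finiteness, fun u hu => ?_⟩
  set S := eLpNorm u 2 volume + eLpNorm (fderiv ℝ u) 2 volume with hS
  let c : ℕ → ℝ := fun n => ((n:ℝ) + 1)⁻¹
  have hc0 : ∀ n, 0 < c n := fun n => by positivity
  have hc1 : ∀ n, c n ≤ 1 := fun n => inv_le_one_of_one_le₀ (by simp)
  let w : ℕ → Rn N → ℂ := fun n x => χ (c n • x) • u x
  have hχn : ∀ n, ContDiff ℝ 1 (fun x => χ (c n • x)) := fun n =>
    hχ.comp (contDiff_const_smul (c n))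
  have hwc : ∀ n, ContDiff ℝ 1 (w n) := fun n => (hχn n).smul hu
  have hws : ∀ n, HasCompactSupport (w n) := fun n =>
    HasCompactSupport.smul_right (χ.hasCompactSupport.comp_homeomorph
      (Homeomorph.smulOfNeZero (c n) (hc0 n).ne'))
  have hlim : ∀ x, Filter.Tendsto (fun n => w n x) Filter.atTop (nhds (u x)) := by
    intro x
    have h1 : Filter.Tendsto c Filter.atTop (nhds 0) := by
      simpa [c, one_div] using tendsto_one_div_add_atTop_nhds_zero_nat (𝕜 := ℝ)
    have h2 : Filter.Tendsto (fun n => χ (c n • x)) Filter.atTop (nhds 1) := by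
      have h3 : Filter.Tendsto (fun n => c n • x) Filter.atTop (nhds 0) := by
        simpa using h1.smul_const x
      have := (hχ.continuous.tendsto 0).comp h3
      have h4 : χ 0 = 1 := χ.one_of_mem_closedBall (by simp [χ])
      rwa [h4] at this
    have h5 := h2.smul_const (u x)
    rw [one_smul] at h5
    exact h5
  have hbd : ∀ n, eLpNorm (w n) (ENNReal.ofReal r) volume ≤ K * (1 + ENNReal.ofReal B) * S := by
    intro n
    refine (H _ (hwc n) (hws n)).trans ?_
    rw [mul_assoc]
    gcongr
    have e1 : eLpNorm (w n) 2 volume ≤ eLpNorm u 2 volume := by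
      refine eLpNorm_mono fun x => ?_
      simp only [w, norm_smul]
      refine mul_le_of_le_one_left (norm_nonneg _) ?_
      rw [Real.norm_of_nonneg χ.nonneg]
      exact χ.le_one
    have e2 : eLpNorm (fderiv ℝ (w n)) 2 volume ≤ eLpNorm (fderiv ℝ u) 2 volume + ENNReal.ofReal B * eLpNorm u 2 volume := by
      have hdm : AEStronglyMeasurable (fun x => ‖fderiv ℝ u x‖) volume :=
        (hu.continuous_fderiv (by norm_num)).norm.aestronglyMeasurable
      have hum : AEStronglyMeasurable (fun x => B * ‖u x‖) volume :=
        (continuous_const.mul hu.continuous.norm).aestronglyMeasurable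
      have e3 : eLpNorm (fun x => B * ‖u x‖) 2 volume = ENNReal.ofReal B * eLpNorm u 2 volume := by
        have := eLpNorm_const_smul (p := 2) (μ := (volume : Measure (Rn N))) B (fun x => ‖u x‖)
        rw [eLpNorm_norm, Real.enorm_of_nonneg hB0] at this
        exact this
      rw [← e3, ← eLpNorm_norm (fderiv ℝ u)]
      refine le_trans ?_ (eLpNorm_add_le hdm hum (by norm_num))
      refine eLpNorm_mono_real fun x => ?_
      have d1 := ((hχn n).differentiable (by norm_num) x).hasFDerivAt
      have d2 := (hu.differentiable (by norm_num) x).hasFDerivAt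
      have d3 := d1.smul d2
      have d4 : ‖fderiv ℝ (fun x => χ (c n • x)) x‖ ≤ B := by
        have := (hχ.differentiable (by norm_num) (c n • x)).hasFDerivAt.comp x
          ((hasFDerivAt_id (𝕜 := ℝ) x).const_smul (c n))
        have e : fderiv ℝ (fun x => χ (c n • x)) x = _ := this.fderiv
        rw [e]
        refine (ContinuousLinearMap.opNorm_comp_le _ _).trans ?_
        calc _ ≤ B * 1 := by
              gcongr
              · exact hB _
              · rw [norm_smul, Real.norm_of_nonneg (hc0 n).le]
                exact mul_le_one₀ (hc1 n) (norm_nonneg _) ContinuousLinearMap.norm_id_le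
          _ = B := mul_one B
      have d5 : fderiv ℝ (w n) x = _ := d3.fderiv
      rw [d5]
      refine (norm_add_le _ _).trans ?_
      simp only [Pi.add_apply]
      gcongr
      · rw [norm_smul]
        refine mul_le_of_le_one_left (norm_nonneg _) ?_
        rw [Real.norm_of_nonneg χ.nonneg]
        exact χ.le_one
      · refine (ContinuousLinearMap.norm_smulRight_apply _ _).le.trans ?_
        gcongr
    calc _ ≤ eLpNorm u 2 volume + (eLpNorm (fderiv ℝ u) 2 volume + ENNReal.ofReal B * eLpNorm u 2 volume) := add_le_add e1 e2
      _ ≤ S + ENNReal.ofReal B * S := by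
        rw [← add_assoc]
        gcongr
        exact le_self_add
      _ = _ := by ring
  refine (Lp.eLpNorm_lim_le_liminf_eLpNorm (fun n => (hwc n).continuous.aestronglyMeasurable) u
    (Filter.Eventually.of_forall hlim)).trans ?_
  exact Filter.liminf_le_of_le (by isBoundedDefault) (fun b hb => by
    obtain ⟨n, hn⟩ := hb.exists
    exact hn.trans (hbd n))

lemma aux_exp_int (c : ℝ) (hc : 0 < c) (T : ℝ) :
    ∫⁻ t in Set.Ioo 0 T, ENNReal.ofReal (Real.exp (-(c * (T - t)))) ≤ ENNReal.ofReal (1 / c) := by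
  have h1 : ∀ t, Real.exp (-(c * (T - t))) = Real.exp (-(c * T)) * Real.exp (c * t) := by
    intro t; rw [← Real.exp_add]; congr 1; ring
  refine (lintegral_mono_set (t := Set.Iic T) (fun x hx => hx.2.le)).trans ?_
  rw [← ofReal_integral_eq_lintegral_ofReal]
  · simp_rw [h1]
    rw [integral_const_mul, integral_exp_mul_Iic hc, ← mul_div_assoc, ← Real.exp_add]
    simp
  · simp_rw [h1]
    exact (integrableOn_exp_mul_Iic hc T).const_mul _
  · exact Filter.Eventually.of_forall fun t => (Real.exp_pos _).le

lemma aux_time (q q' κ : ℝ) (hq : 2 < q) (hqq : 1 / q + 1 / q' = 1) (hκ : 0 < κ) :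
    ∃ K : ℝ≥0∞, K ≠ ∞ ∧ ∀ (T : ℝ) (b : ℝ → ℝ≥0∞),
      (∫⁻ t in Set.Ioo 0 T, (ENNReal.ofReal (Real.exp (-(κ * (T - t)))) * b t) ^ q') ^ (1 / q') ≤
        K * (∫⁻ t in Set.Ioo 0 T, b t ^ q) ^ (1 / q) := by
  have hq0 : 0 < q := by linarith
  have hlt : 1 / q < 1 / 2 := one_div_lt_one_div_of_lt (by norm_num) hq
  have hq0' : 0 < 1 / q := by positivity
  have hq' : 0 < q' := by
    have : 0 < 1 / q' := by linarith
    exact one_div_pos.1 this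
  set s := q / (q - 2) with hs
  have hs0 : 0 < s := div_pos hq0 (by linarith)
  have hs1 : 1 / s = 1 - 2 * (1 / q) := by
    rw [hs, one_div_div]; field_simp
  have hsum : 1 / q' = 1 / s + 1 / q := by rw [hs1]; linarith
  have hlt2 : q' < s := by
    apply (one_div_lt_one_div hs0 hq').1
    linarith
  refine ⟨ENNReal.ofReal (1 / (κ * s)) ^ (1 / s), ENNReal.rpow_ne_top_of_nonneg (by positivity) (by simp), fun T b => ?_⟩
  set E : ℝ → ℝ≥0∞ := fun t => ENNReal.ofReal (Real.exp (-(κ * (T - t)))) with hE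
  have hEm : Measurable E := by fun_prop
  have hE0 : ∀ t, E t ≠ 0 := fun t => by simp [hE, Real.exp_pos]
  have hEt : ∀ t, E t ≠ ∞ := fun t => by simp [hE]
  obtain ⟨h, hm, hle, heq⟩ := exists_measurable_le_lintegral_eq (μ := volume.restrict (Set.Ioo 0 T))
    (fun t => (E t * b t) ^ q')
  set b' : ℝ → ℝ≥0∞ := fun t => h t ^ (1 / q') / E t with hb'
  have hbm : Measurable b' := (hm.pow_const _).div hEm
  have hbb : ∀ t, b' t ≤ b t := by
    intro t
    rw [hb']
    refine ENNReal.div_le_of_le_mul' ?_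
    have h1 : h t ^ (1 / q') ≤ ((E t * b t) ^ q') ^ (1 / q') := by
      gcongr; exact hle t
    rwa [← ENNReal.rpow_mul, mul_one_div_cancel hq'.ne', ENNReal.rpow_one] at h1
  have hbe : ∀ t, (E * b') t ^ q' = h t := by
    intro t
    rw [Pi.mul_apply, hb', ENNReal.mul_div_cancel (hE0 t) (hEt t), ← ENNReal.rpow_mul, one_div_mul_cancel hq'.ne',
      ENNReal.rpow_one]
  have hol := ENNReal.lintegral_Lp_mul_le_Lq_mul_Lr hq' hlt2 hsum (volume.restrict (Set.Ioo 0 T))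
    hEm.aemeasurable hbm.aemeasurable
  simp_rw [hbe] at hol
  rw [heq]
  refine hol.trans ?_
  gcongr
  · have : ∀ t, E t ^ s = ENNReal.ofReal (Real.exp (-(κ * s * (T - t)))) := by
      intro t
      rw [hE, ENNReal.ofReal_rpow_of_pos (Real.exp_pos _), ← Real.exp_mul]
      congr 2; ring
    simp_rw [this]
    exact aux_exp_int _ (by positivity) T
  · exact hbb _

lemma aux_pt (p : ℝ) (f : ℂ → ℂ) (hf : H1bound p f) :
    ∃ C : ℝ, 0 ≤ C ∧ ∀ a b : ℂ, (p ≤ 2 → ‖fderiv ℝ f (a + b) - fderiv ℝ f a‖ ≤ C * ‖b‖ ^ (p - 1)) ∧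
      (2 < p → ‖fderiv ℝ f (a + b) - fderiv ℝ f a‖ ≤
        C * (‖a‖ ^ (p - 2) * ‖b‖) + C * ‖b‖ ^ (p - 1)) := by
  obtain ⟨-, -, -, C, h1, h2⟩ := hf
  have hk : (0:ℝ) < 2 ^ (p - 2) := by positivity
  refine ⟨|C| * (2 ^ (p - 2) + 1), by positivity, fun a b => ⟨fun h => ?_, fun h => ?_⟩⟩
  · refine (h1 h (a + b) a).trans ?_
    rw [add_sub_cancel_left]
    gcongr
    calc C ≤ |C| * 1 := by rw [mul_one]; exact le_abs_self C
      _ ≤ _ := by gcongr; linarith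
  · refine (h2 h (a + b) a).trans ?_
    rw [add_sub_cancel_left]
    have e1 : ‖a + b‖ ^ (p - 2) ≤ 2 ^ (p - 2) * (‖a‖ ^ (p - 2) + ‖b‖ ^ (p - 2)) := by
      have hpp : 0 ≤ p - 2 := by linarith
      have : ‖a + b‖ ≤ 2 * max ‖a‖ ‖b‖ := by
        refine (norm_add_le a b).trans ?_
        linarith [le_max_left ‖a‖ ‖b‖, le_max_right ‖a‖ ‖b‖]
      calc _ ≤ (2 * max ‖a‖ ‖b‖) ^ (p - 2) := by gcongr
        _ = 2 ^ (p - 2) * (max ‖a‖ ‖b‖) ^ (p - 2) := by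
          rw [Real.mul_rpow (by norm_num) (by positivity)]
        _ ≤ _ := by
          gcongr
          have ha : 0 ≤ ‖a‖ ^ (p - 2) := by positivity
          have hb : 0 ≤ ‖b‖ ^ (p - 2) := by positivity
          rcases max_choice ‖a‖ ‖b‖ with h | h <;> rw [h] <;> linarith
    have e2 : ‖b‖ ^ (p - 1) = ‖b‖ ^ (p - 2) * ‖b‖ := by
      rw [show p - 1 = (p - 2) + 1 by ring, Real.rpow_add_of_nonneg (norm_nonneg _) (by linarith) (by norm_num),
        Real.rpow_one]
    rw [e2]
    have ha : 0 ≤ ‖a‖ ^ (p - 2) := by positivity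
    have hb : 0 ≤ ‖b‖ ^ (p - 2) := by positivity
    calc C * (‖a + b‖ ^ (p - 2) + ‖a‖ ^ (p - 2)) * ‖b‖
        ≤ |C| * ((2 ^ (p - 2) + 1) * (‖a‖ ^ (p - 2) + ‖b‖ ^ (p - 2))) * ‖b‖ := by
          gcongr ?_ * ‖b‖
          refine mul_le_mul (le_abs_self C) ?_ (by positivity) (abs_nonneg C)
          linarith
      _ = _ := by ring

lemma aux_holder (a b c : ℝ) (ha : 0 < a) (hb : 0 < b) (hc : 0 < c) (h : 1 / a + 1 / b = 1 / c) :
    HolderTriple (ENNReal.ofReal a) (ENNReal.ofReal b) (ENNReal.ofReal c) := by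
  refine ⟨?_⟩
  rw [← ENNReal.ofReal_inv_of_pos ha, ← ENNReal.ofReal_inv_of_pos hb, ← ENNReal.ofReal_inv_of_pos hc,
    ← ENNReal.ofReal_add (by positivity) (by positivity)]
  simp only [one_div] at h
  rw [h]

lemma aux_space {N : ℕ} (p : ℝ) (hp : 1 < p) (f : ℂ → ℂ) (hf : H1bound p f) (φ : Rn N → ℂ)
    (hφ : Continuous φ) (hφr : eLpNorm φ (ENNReal.ofReal (p + 1)) volume ≠ ∞) (r' : ℝ≥0∞)
    (hr' : 1 / ENNReal.ofReal (p + 1) + 1 / r' = 1) :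
    ∃ C : ℝ≥0∞, C ≠ ∞ ∧ ∀ v w : Rn N → ℂ, Continuous v → AEStronglyMeasurable w volume →
      eLpNorm (fun x => -Complex.I * ((fderiv ℝ f (φ x + v x) - fderiv ℝ f (φ x)) (w x))) r' volume ≤
        C * (eLpNorm v (ENNReal.ofReal (p + 1)) volume +
          eLpNorm v (ENNReal.ofReal (p + 1)) volume ^ (p - 1)) *
          eLpNorm w (ENNReal.ofReal (p + 1)) volume := by
  obtain ⟨C, hC, H⟩ := aux_pt p f hf
  have hp1 : 0 < p - 1 := by linarith
  set s : ℝ := (p + 1) / (p - 1) with hs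
  have hs0 : 0 < s := by apply div_pos <;> linarith
  have hs1 : 1 ≤ s := by rw [hs, one_le_div hp1]; linarith
  have hr'' : r' = ENNReal.ofReal ((p + 1) / p) := by
    have h1 : 1 / ENNReal.ofReal (p + 1) = ENNReal.ofReal (1 / (p + 1)) := by
      rw [one_div, one_div, ENNReal.ofReal_inv_of_pos (by linarith)]
    have h2 : 1 / r' = ENNReal.ofReal (p / (p + 1)) := by
      have h3 : ENNReal.ofReal (1 / (p + 1)) + ENNReal.ofReal (p / (p + 1)) = 1 := by
        rw [← ENNReal.ofReal_add (by positivity) (by positivity), ← ENNReal.ofReal_one]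
        congr 1; field_simp; ring
      rw [h1] at hr'
      exact (ENNReal.add_right_inj ENNReal.ofReal_ne_top).1 (hr'.trans h3.symm)
    rw [one_div] at h2
    rw [← inv_inv r', h2, ← ENNReal.ofReal_inv_of_pos (by positivity), inv_div]
  have hT1 : HolderTriple (ENNReal.ofReal s) (ENNReal.ofReal (p + 1)) r' := by
    rw [hr'']
    refine aux_holder _ _ _ hs0 (by linarith) (by positivity) ?_
    rw [hs]; field_simp; ring
  have hsr : ENNReal.ofReal s * ENNReal.ofReal (p - 1) = ENNReal.ofReal (p + 1) := by
    rw [← ENNReal.ofReal_mul hs0.le, hs, div_mul_cancel₀ _ hp1.ne']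
  have hfc : Continuous (fderiv ℝ f) := hf.1.continuous_fderiv (by norm_num)
  set Φ := eLpNorm φ (ENNReal.ofReal (p + 1)) volume with hΦ
  have hcm : ∀ g : Rn N → ℝ, eLpNorm (fun x => C * g x) (ENNReal.ofReal s) volume = 
      ENNReal.ofReal C * eLpNorm g (ENNReal.ofReal s) volume := by
    intro g
    have := eLpNorm_const_smul (p := ENNReal.ofReal s) (μ := (volume : Measure (Rn N))) C g
    rw [Real.enorm_of_nonneg hC] at this
    exact this
  have key : ∀ v : Rn N → ℂ, Continuous v → 
      eLpNorm (fun x => fderiv ℝ f (φ x + v x) - fderiv ℝ f (φ x)) (ENNReal.ofReal s) volume ≤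
      ENNReal.ofReal C * (Φ ^ |p - 2| + 1) * (eLpNorm v (ENNReal.ofReal (p + 1)) volume +
          eLpNorm v (ENNReal.ofReal (p + 1)) volume ^ (p - 1)) := by
    intro v hv
    set V := eLpNorm v (ENNReal.ofReal (p + 1)) volume with hV
    have hVp : eLpNorm (fun x => ‖v x‖ ^ (p - 1)) (ENNReal.ofReal s) volume = V ^ (p - 1) := by
      rw [eLpNorm_norm_rpow v hp1, hsr]
    rcases le_or_gt p 2 with h | h
    · refine (eLpNorm_mono_real fun x => (H (φ x) (v x)).1 h).trans ?_
      rw [hcm, hVp, mul_assoc]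
      gcongr
      calc V ^ (p - 1) ≤ V + V ^ (p - 1) := le_add_self
        _ ≤ _ := le_mul_of_one_le_left zero_le le_add_self
    · have hp2 : 0 < p - 2 := by linarith
      have hT2 : HolderTriple (ENNReal.ofReal ((p + 1) / (p - 2))) (ENNReal.ofReal (p + 1)) (ENNReal.ofReal s) := by
        refine aux_holder _ _ _ (by positivity) (by linarith) hs0 ?_
        rw [hs]; field_simp; ring
      have m1 : AEStronglyMeasurable (fun x => ‖φ x‖ ^ (p - 2)) (volume : Measure (Rn N)) :=
        (hφ.norm.rpow_const (fun x => Or.inr hp2.le)).aestronglyMeasurable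
      have m2 : AEStronglyMeasurable (fun x => ‖v x‖) (volume : Measure (Rn N)) := 
        hv.norm.aestronglyMeasurable
      have m3 : AEStronglyMeasurable (fun x => ‖v x‖ ^ (p - 1)) (volume : Measure (Rn N)) :=
        (hv.norm.rpow_const (fun x => Or.inr hp1.le)).aestronglyMeasurable
      have hA : eLpNorm (fun x => ‖φ x‖ ^ (p - 2) * ‖v x‖) (ENNReal.ofReal s) volume ≤ Φ ^ (p - 2) * V := by
        have := eLpNorm_smul_le_mul_eLpNorm (p := ENNReal.ofReal ((p + 1) / (p - 2)))
          (q := ENNReal.ofReal (p + 1)) (r := ENNReal.ofReal s) m2 m1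
        rw [eLpNorm_norm_rpow φ hp2, ← ENNReal.ofReal_mul (by positivity), div_mul_cancel₀ _ hp2.ne',
          eLpNorm_norm] at this
        exact this
      refine (eLpNorm_mono_real (g := (fun x => C * (‖φ x‖ ^ (p - 2) * ‖v x‖)) + fun x => C * ‖v x‖ ^ (p - 1))
        fun x => (H (φ x) (v x)).2 h).trans ?_
      refine (eLpNorm_add_le ((m1.mul m2).const_mul C) (m3.const_mul C) (by simpa using hs1)).trans ?_
      rw [hcm, hcm, hVp, abs_of_pos hp2]
      calc _ ≤ ENNReal.ofReal C * (Φ ^ (p - 2) * V) + ENNReal.ofReal C * V ^ (p - 1) := by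
            gcongr
            exact hA
        _ ≤ ENNReal.ofReal C * (Φ ^ (p - 2) * V) + ENNReal.ofReal C * V ^ (p - 1) +
            ENNReal.ofReal C * (V + Φ ^ (p - 2) * V ^ (p - 1)) := le_self_add
        _ = _ := by ring
  refine ⟨ENNReal.ofReal C * (Φ ^ |p - 2| + 1), ?_, fun v w hv hw => ?_⟩
  · have := ENNReal.rpow_ne_top_of_nonneg (abs_nonneg (p - 2)) hφr
    finiteness
  · have := eLpNorm_le_eLpNorm_mul_eLpNorm_of_nnnorm (p := ENNReal.ofReal s) (q := ENNReal.ofReal (p + 1)) (r := r')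
      (μ := (volume : Measure (Rn N))) (f := fun x => fderiv ℝ f (φ x + v x) - fderiv ℝ f (φ x)) (g := w)
      (((hfc.comp (hφ.add hv)).sub (hfc.comp hφ)).aestronglyMeasurable) hw
      (fun L z => -Complex.I * L z) 1 (Filter.Eventually.of_forall fun x => by
        rw [nnnorm_mul, nnnorm_neg, Complex.nnnorm_I, one_mul, one_mul]
        exact ContinuousLinearMap.le_opNNNorm _ _)
    refine this.trans ?_
    rw [ENNReal.coe_one, one_mul]
    gcongr
    exact key v hv


lemma aux_tderiv_meas {N : ℕ} (v : ℝ → Rn N → ℂ) (hc : ∀ t, Continuous (v t))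
    (hd : ∀ t x, DifferentiableAt ℝ (fun s => v s x) t) (t : ℝ) :
    AEStronglyMeasurable (tderiv v t) volume := by
  let c : ℕ → ℝ := fun n => 1 / ((n : ℝ) + 1)
  have hc0 : Filter.Tendsto c Filter.atTop (nhdsWithin 0 {0}ᶜ) := by
    refine tendsto_nhdsWithin_iff.2 ⟨tendsto_one_div_add_atTop_nhds_zero_nat, ?_⟩
    refine Filter.Eventually.of_forall fun n => ?_
    have : 0 < c n := by positivity
    exact this.ne'
  have hm : Measurable (tderiv v t) := by
    refine measurable_of_tendsto_metrizable
      (f := fun n x => (c n)⁻¹ • (v (t + c n) x - v t x)) (fun n => ?_) ?_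
    · exact (((hc (t + c n)).sub (hc t)).const_smul ((c n)⁻¹)).measurable
    · rw [tendsto_pi_nhds]
      intro x
      exact (hasDerivAt_iff_tendsto_slope_zero.1 (hd t x).hasDerivAt).comp hc0
  exact hm.aestronglyMeasurable

lemma aux_sobNorm_le {N : ℕ} (u : Rn N → ℂ) (k : ℕ) (hk : 1 ≤ k) :
    eLpNorm u 2 volume + eLpNorm (fderiv ℝ u) 2 volume ≤ sobNorm k u := by
  have h0 : eLpNorm u 2 volume = eLpNorm (iteratedFDeriv ℝ 0 u) 2 volume :=
    eLpNorm_congr_norm_ae (Filter.Eventually.of_forall fun x => by simp)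
  have h1 : eLpNorm (fderiv ℝ u) 2 volume = eLpNorm (iteratedFDeriv ℝ 1 u) 2 volume :=
    eLpNorm_congr_norm_ae (Filter.Eventually.of_forall fun x => by
      rw [norm_iteratedFDeriv_one])
  rw [h0, h1, sobNorm]
  have : ∑ i ∈ Finset.range 2, eLpNorm (iteratedFDeriv ℝ i u) 2 volume ≤
      ∑ i ∈ Finset.range (k + 1), eLpNorm (iteratedFDeriv ℝ i u) 2 volume :=
    Finset.sum_le_sum_of_subset (Finset.range_mono (by omega))
  simpa [Finset.sum_range_succ] using this

lemma aux_pull (a : ℝ) (ha : 0 < a) (c : ℝ≥0∞) (hc : c ≠ ∞) (ν : Measure ℝ) (F : ℝ → ℝ≥0∞) :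
    (∫⁻ t, (c * F t) ^ a ∂ν) ^ (1 / a) = c * (∫⁻ t, F t ^ a ∂ν) ^ (1 / a) := by
  simp_rw [ENNReal.mul_rpow_of_nonneg _ _ ha.le]
  rw [lintegral_const_mul' _ _ (ENNReal.rpow_ne_top_of_nonneg ha.le hc),
    ENNReal.mul_rpow_of_nonneg _ _ (by positivity), ← ENNReal.rpow_mul, mul_one_div_cancel ha.ne',
    ENNReal.rpow_one]

lemma aux_q {N : ℕ} (hN : 1 ≤ N) (p : ℝ) (hs : Subcrit N p) (q q' : ℝ≥0∞)
    (hadm : Admissible N q (ENNReal.ofReal (p + 1))) (hq' : 1 / q + 1 / q' = 1) :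
    q ≠ ∞ ∧ q' ≠ ∞ ∧ 2 < q.toReal ∧ 1 / q.toReal + 1 / q'.toReal = 1 := by
  obtain ⟨hp, hs⟩ := hs
  have hN' : (1:ℝ) ≤ N := by exact_mod_cast hN
  have hlt : 1 / (p + 1) < 1 / 2 := one_div_lt_one_div_of_lt (by norm_num) (by linarith)
  have hR : (N : ℝ≥0∞) * (1 / 2 - 1 / ENNReal.ofReal (p + 1)) =
      ENNReal.ofReal (N * (1 / 2 - 1 / (p + 1))) := by
    rw [ENNReal.ofReal_mul (by positivity), ENNReal.ofReal_sub _ (by positivity),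
      ENNReal.ofReal_natCast]
    congr 2
    · simp
    · rw [one_div, one_div, ENNReal.ofReal_inv_of_pos (by linarith)]
  have h2 := hadm.2.1
  rw [hR] at h2
  have hpos : 0 < N * (1 / 2 - 1 / (p + 1)) := mul_pos (by linarith) (by linarith)
  have hlt1 : N * (1 / 2 - 1 / (p + 1)) < 1 := by
    rcases lt_or_ge N 3 with h | h
    · have : (N : ℝ) ≤ 2 := by exact_mod_cast (by omega : N ≤ 2)
      have h0 : 0 < 1 / (p + 1) := by positivity
      nlinarith
    · have h3 := hs h
      have hN3 : (3:ℝ) ≤ N := by exact_mod_cast h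
      have h4 : p + 1 < 2 * (N:ℝ) / (N - 2) := by linarith
      have h5 := one_div_lt_one_div_of_lt (by linarith) h4
      rw [one_div_div] at h5
      have h6 : ((N:ℝ) - 2) / (2 * N) = 1 / 2 - 1 / N := by field_simp
      rw [h6] at h5
      have h7 : 1 / 2 - 1 / (p + 1) < 1 / (N:ℝ) := by linarith
      calc _ < (N:ℝ) * (1 / N) := by gcongr
        _ = 1 := by field_simp
  have hqt : q ≠ ∞ := by
    rintro rfl
    rw [ENNReal.div_top] at h2
    have := ENNReal.ofReal_pos.2 hpos
    rw [← h2] at this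
    exact lt_irrefl _ this
  have hq0 : q ≠ 0 := by
    rintro rfl
    rw [ENNReal.div_zero (by norm_num)] at h2
    exact ENNReal.ofReal_ne_top h2.symm
  have hq2 : 2 < q.toReal := by
    have h3 := congrArg ENNReal.toReal h2
    rw [ENNReal.toReal_ofReal hpos.le, ENNReal.toReal_div] at h3
    have h4 : 0 < q.toReal := ENNReal.toReal_pos hq0 hqt
    rw [← h3, div_lt_one h4] at hlt1
    simpa using hlt1
  have hq0' : q' ≠ 0 := by
    rintro rfl
    simp at hq'
  have hreal : 1 / q.toReal + 1 / q'.toReal = 1 := by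
    have h3 := congrArg ENNReal.toReal hq'
    rw [ENNReal.toReal_add (by simp [hq0]) (by simp [hq0']), ENNReal.toReal_div, ENNReal.toReal_div] at h3
    simpa using h3
  refine ⟨hqt, ?_, hq2, hreal⟩
  rintro rfl
  have : 1 / q.toReal < 1 / 2 := one_div_lt_one_div_of_lt (by norm_num) hq2
  simp at hreal this
  rw [hreal] at hq2
  norm_num at hq2

lemma aux_main {N : ℕ} (hN : 1 ≤ N) (p : ℝ) (hs : Subcrit N p) (f : ℂ → ℂ) (hf : H1bound p f)
    (φ : Rn N → ℂ) (hφ : MemSobolev 1 φ) (lam μ α : ℝ) (hlam : 0 < lam) (hα1 : α ≤ 1)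
    (hαp : α ≤ p - 1) (hμ : μ < (1 + α) * lam) (q q' r' : ℝ≥0∞)
    (hadm : Admissible N q (ENNReal.ofReal (p + 1))) (hq' : 1 / q + 1 / q' = 1)
    (hr' : 1 / ENNReal.ofReal (p + 1) + 1 / r' = 1) :
    ∃ C : ℝ≥0∞, C ≠ ∞ ∧ ∀ (v : ℝ → Rn N → ℂ) (T : ℝ) (X : ℝ≥0∞), (∀ t, MemSobolev 2 (v t)) →
        (∀ t x, DifferentiableAt ℝ (fun s => v s x) t) → wNormH2 lam T v ≤ X →
        wNorm q (ENNReal.ofReal (p + 1)) lam T (tderiv v) ≤ X → X ≠ ∞ →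
        wNorm q' r' μ T (hderiv f φ v) ≤ C * (X ^ (2:ℝ) + X ^ (p + 1 - 1)) := by
  obtain ⟨hqt, hqt', hq2, hqq⟩ := aux_q hN p hs q q' hadm hq'
  have hp := hs.1
  have hp1 : 0 < p - 1 := by linarith
  have hqpos' : 0 < q'.toReal := by
    have : 1 / q.toReal < 1 / 2 := one_div_lt_one_div_of_lt (by norm_num) hq2
    have : 0 < 1 / q'.toReal := by linarith
    exact one_div_pos.1 this
  obtain ⟨K, hK, HK⟩ := aux_sob hN (p + 1) (by linarith) (fun h => by linarith [hs.2 h])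
  have hφr : eLpNorm φ (ENNReal.ofReal (p + 1)) volume ≠ ∞ := by
    refine ne_top_of_le_ne_top ?_ ((HK φ hφ.1).trans (mul_le_mul_right (aux_sobNorm_le φ 1 le_rfl) K))
    refine ENNReal.mul_ne_top hK ?_
    rw [sobNorm]
    refine ENNReal.sum_ne_top.2 fun i hi => ?_
    exact (hφ.2 i (by simpa [Nat.lt_succ_iff] using hi)).2.ne
  obtain ⟨C1, hC1, H1⟩ := aux_space p hp f hf φ hφ.1.continuous hφr r' hr'
  obtain ⟨K2, hK2, H2⟩ := aux_time q.toReal q'.toReal ((1 + α) * lam - μ) hq2 hqq (by linarith)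
  have hKp := ENNReal.rpow_ne_top_of_nonneg hp1.le hK
  refine ⟨C1 * (K + K ^ (p - 1)) * K2, by finiteness, fun v T X hv hd hX1 hX2 hXt => ?_⟩
  have hXp := ENNReal.rpow_ne_top_of_nonneg hp1.le hXt
  set b : ℝ → ℝ≥0∞ := fun t => ENNReal.ofReal (Real.exp (lam * T)) *
    (ENNReal.ofReal (Real.exp (-(lam * t))) * eLpNorm (tderiv v t) (ENNReal.ofReal (p + 1)) volume) with hb
  have hbX : (∫⁻ t in Set.Ioo 0 T, b t ^ q.toReal) ^ (1 / q.toReal) ≤ X := by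
    rw [hb, aux_pull _ (by linarith) _ ENNReal.ofReal_ne_top]
    rw [wNorm, twNorm, timeLp, if_neg hqt] at hX2
    exact hX2
  have hS : ∀ᵐ t ∂(volume.restrict (Set.Ioo 0 T)),
      sobNorm 2 (v t) ≤ ENNReal.ofReal (Real.exp (-(lam * (T - t)))) * X := by
    have := _root_.ae_le_essSup (f := fun t => ENNReal.ofReal (Real.exp (-(lam * t))) * sobNorm 2 (v t))
      (μ := volume.restrict (Set.Ioo 0 T))
    filter_upwards [this] with t ht
    have h1 : ENNReal.ofReal (Real.exp (lam * T)) *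
        (ENNReal.ofReal (Real.exp (-(lam * t))) * sobNorm 2 (v t)) ≤ X :=
      (mul_le_mul_right ht _).trans hX1
    calc sobNorm 2 (v t) = ENNReal.ofReal (Real.exp (-(lam * (T - t)))) *
        (ENNReal.ofReal (Real.exp (lam * T)) *
        (ENNReal.ofReal (Real.exp (-(lam * t))) * sobNorm 2 (v t))) := by
          rw [← mul_assoc, ← mul_assoc, ← ENNReal.ofReal_mul (by positivity),
            ← ENNReal.ofReal_mul (by positivity), ← Real.exp_add, ← Real.exp_add]
          have : -(lam * (T - t)) + lam * T + -(lam * t) = 0 := by ring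
          rw [this]; simp
      _ ≤ _ := by gcongr
  have hpt : ∀ᵐ t ∂(volume.restrict (Set.Ioo 0 T)),
      ENNReal.ofReal (Real.exp (μ * T)) * (ENNReal.ofReal (Real.exp (-(μ * t))) *
        eLpNorm (hderiv f φ v t) r' volume) ≤
      (C1 * (K + K ^ (p - 1)) * (X + X ^ (p - 1))) *
        (ENNReal.ofReal (Real.exp (-(((1 + α) * lam - μ) * (T - t)))) * b t) := by
    filter_upwards [hS, ae_restrict_mem measurableSet_Ioo] with t ht htm
    have hτ : 0 ≤ T - t := by linarith [htm.2]
    have hc : ∀ t, Continuous (v t) := fun t => (hv t).1.continuous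
    have g1 := H1 (v t) (tderiv v t) (hc t) (aux_tderiv_meas v hc hd t)
    have g2 : eLpNorm (v t) (ENNReal.ofReal (p + 1)) volume ≤ K * sobNorm 2 (v t) :=
      (HK (v t) ((hv t).1.of_le (by norm_num))).trans
        (mul_le_mul_right (aux_sobNorm_le (v t) 2 (by norm_num)) K)
    set V := eLpNorm (v t) (ENNReal.ofReal (p + 1)) volume
    set W := eLpNorm (tderiv v t) (ENNReal.ofReal (p + 1)) volume
    set S := sobNorm 2 (v t)
    set e := ENNReal.ofReal (Real.exp (-(lam * α * (T - t)))) with he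
    have s1 : S ≤ e * X := by
      refine ht.trans ?_
      gcongr ?_ * X
      refine ENNReal.ofReal_le_ofReal (Real.exp_le_exp.2 ?_)
      have : lam * α ≤ lam := by nlinarith
      nlinarith
    have s2 : S ^ (p - 1) ≤ e * X ^ (p - 1) := by
      calc S ^ (p - 1) ≤ (ENNReal.ofReal (Real.exp (-(lam * (T - t)))) * X) ^ (p - 1) := by gcongr
        _ = ENNReal.ofReal (Real.exp (-(lam * (T - t)) * (p - 1))) * X ^ (p - 1) := by
          rw [ENNReal.mul_rpow_of_nonneg _ _ hp1.le, ENNReal.ofReal_rpow_of_pos (Real.exp_pos _), ← Real.exp_mul]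
        _ ≤ _ := by
          gcongr ?_ * X ^ (p - 1)
          refine ENNReal.ofReal_le_ofReal (Real.exp_le_exp.2 ?_)
          have : lam * α ≤ lam * (p - 1) := by gcongr
          nlinarith
    have s3 : V + V ^ (p - 1) ≤ (K + K ^ (p - 1)) * (e * (X + X ^ (p - 1))) := by
      calc V + V ^ (p - 1) ≤ K * S + (K * S) ^ (p - 1) := by gcongr
        _ = K * S + K ^ (p - 1) * S ^ (p - 1) := by rw [ENNReal.mul_rpow_of_nonneg _ _ hp1.le]
        _ ≤ K * (e * X) + K ^ (p - 1) * (e * X ^ (p - 1)) := by gcongr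
        _ ≤ K * (e * X) + K ^ (p - 1) * (e * X ^ (p - 1)) +
            (K * (e * X ^ (p - 1)) + K ^ (p - 1) * (e * X)) := le_self_add
        _ = _ := by ring
    have g3 : eLpNorm (hderiv f φ v t) r' volume ≤
        C1 * ((K + K ^ (p - 1)) * (e * (X + X ^ (p - 1)))) * W := by
      refine le_trans (g1 : eLpNorm (hderiv f φ v t) r' volume ≤ _) ?_
      gcongr
    calc _ ≤ ENNReal.ofReal (Real.exp (μ * T)) * (ENNReal.ofReal (Real.exp (-(μ * t))) *
        (C1 * ((K + K ^ (p - 1)) * (e * (X + X ^ (p - 1)))) * W)) := by gcongr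
      _ = (C1 * (K + K ^ (p - 1)) * (X + X ^ (p - 1))) * ((ENNReal.ofReal (Real.exp (μ * T)) *
          ENNReal.ofReal (Real.exp (-(μ * t))) * e) * W) := by ring
      _ = (C1 * (K + K ^ (p - 1)) * (X + X ^ (p - 1))) *
        ((ENNReal.ofReal (Real.exp (-(((1 + α) * lam - μ) * (T - t)))) *
          ENNReal.ofReal (Real.exp (lam * T)) * ENNReal.ofReal (Real.exp (-(lam * t)))) * W) := by
          congr 2
          rw [he, ← ENNReal.ofReal_mul (by positivity), ← ENNReal.ofReal_mul (by positivity),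
            ← ENNReal.ofReal_mul (by positivity), ← ENNReal.ofReal_mul (by positivity),
            ← Real.exp_add, ← Real.exp_add, ← Real.exp_add, ← Real.exp_add]
          congr 2
          ring
      _ = _ := by rw [hb]; ring
  rw [wNorm, twNorm, timeLp, if_neg hqt', ← aux_pull _ hqpos' _ ENNReal.ofReal_ne_top]
  calc _ ≤ (∫⁻ t in Set.Ioo 0 T, ((C1 * (K + K ^ (p - 1)) * (X + X ^ (p - 1))) *
        (ENNReal.ofReal (Real.exp (-(((1 + α) * lam - μ) * (T - t)))) * b t)) ^ q'.toReal) ^ (1 / q'.toReal) := by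
        refine ENNReal.rpow_le_rpow (lintegral_mono_ae ?_) (by positivity)
        filter_upwards [hpt] with t ht
        exact ENNReal.rpow_le_rpow ht hqpos'.le
    _ = (C1 * (K + K ^ (p - 1)) * (X + X ^ (p - 1))) * (∫⁻ t in Set.Ioo 0 T, 
        (ENNReal.ofReal (Real.exp (-(((1 + α) * lam - μ) * (T - t)))) * b t) ^ q'.toReal) ^ (1 / q'.toReal) :=
        aux_pull _ hqpos' _ (by finiteness) _ _
    _ ≤ (C1 * (K + K ^ (p - 1)) * (X + X ^ (p - 1))) * (K2 * X) := by
        gcongr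
        exact (H2 T b).trans (by gcongr)
    _ = (C1 * (K + K ^ (p - 1)) * K2) * (X * X + X ^ (p - 1) * X) := by ring
    _ = _ := by
        congr 2
        · rw [ENNReal.rpow_two, sq]
        · rw [show p + 1 - 1 = (p - 1) + 1 by ring, ENNReal.rpow_add_of_nonneg _ _ hp1.le (by norm_num),
            ENNReal.rpow_one]

end

noncomputable section

/-- Lemma 3.5: ‖∂ₜh_j(v)‖_{L^{q_j',μ}_T L^{r_j'}} ≤ C(‖v‖_{X_T}² + ‖v‖_{X_T}^{r_j-1}),
where ∂ₜh_j(v) = J[Df_j(φ+v) - Df_j(φ)]∂ₜv. -/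
theorem weighted_nonlinear_time_derivative_estimate
    {N : ℕ} (hN : 1 ≤ N) (g : ℝ → ℝ) (f₁ f₂ : ℂ → ℂ) (p₁ p₂ ω : ℝ)
    (φ : Rn N → ℂ)
    (h1 : H1full N g f₁ f₂ p₁ p₂) (h2 : H2hyp ω g φ) (h3 : H3hyp g ω φ)
    (lamstar : ℂ) (hstar : 0 < lamstar.re ∧ IsEigen g ω φ lamstar)
    (hmax : ∀ z : ℂ, IsEigen g ω φ z → z.re ≤ lamstar.re)
    (ν lam μ : ℝ)
    (hchain : 0 < lam ∧ lam < lamstar.re ∧ lamstar.re < ν ∧ ν < μ ∧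
      μ < (1 + alphaConst (p₁ + 1) (p₂ + 1)) * lam)
    (q₁ q₂ q₁' r₁' q₂' r₂' : ℝ≥0∞)
    (hadm1 : Admissible N q₁ (ENNReal.ofReal (p₁ + 1)))
    (hadm2 : Admissible N q₂ (ENNReal.ofReal (p₂ + 1)))
    (hq₁' : 1 / q₁ + 1 / q₁' = 1) (hr₁' : 1 / ENNReal.ofReal (p₁ + 1) + 1 / r₁' = 1)
    (hq₂' : 1 / q₂ + 1 / q₂' = 1) (hr₂' : 1 / ENNReal.ofReal (p₂ + 1) + 1 / r₂' = 1) :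
    ∃ C : ℝ, 0 < C ∧
      ∀ (v : ℝ → Rn N → ℂ) (T : ℝ), 0 < T → (∀ t, MemSobolev 2 (v t)) →
        (∀ t x, DifferentiableAt ℝ (fun s => v s x) t) →
        (wNorm q₁' r₁' μ T (hderiv f₁ φ v) ≤
          ENNReal.ofReal C *
            (XNorm q₁ (ENNReal.ofReal (p₁ + 1)) q₂ (ENNReal.ofReal (p₂ + 1)) lam T v
                ^ (2 : ℝ) +
              XNorm q₁ (ENNReal.ofReal (p₁ + 1)) q₂ (ENNReal.ofReal (p₂ + 1)) lam T v
                ^ (p₁ + 1 - 1))) ∧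
        (wNorm q₂' r₂' μ T (hderiv f₂ φ v) ≤
          ENNReal.ofReal C *
            (XNorm q₁ (ENNReal.ofReal (p₁ + 1)) q₂ (ENNReal.ofReal (p₂ + 1)) lam T v
                ^ (2 : ℝ) +
              XNorm q₁ (ENNReal.ofReal (p₁ + 1)) q₂ (ENNReal.ofReal (p₂ + 1)) lam T v
                ^ (p₂ + 1 - 1))) := by
  have hα1 : alphaConst (p₁ + 1) (p₂ + 1) ≤ 1 := min_le_left _ _
  have hαp1 : alphaConst (p₁ + 1) (p₂ + 1) ≤ p₁ - 1 := by
    have : alphaConst (p₁ + 1) (p₂ + 1) ≤ p₁ + 1 - 2 := (min_le_right _ _).trans (min_le_left _ _)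
    linarith
  have hαp2 : alphaConst (p₁ + 1) (p₂ + 1) ≤ p₂ - 1 := by
    have : alphaConst (p₁ + 1) (p₂ + 1) ≤ p₂ + 1 - 2 := (min_le_right _ _).trans (min_le_right _ _)
    linarith
  obtain ⟨C1, hC1, H1⟩ := aux_main hN p₁ h1.sub1 f₁ h1.bd1 φ h2.2.2.1 lam μ _ hchain.1 hα1 hαp1
    hchain.2.2.2.2 q₁ q₁' r₁' hadm1 hq₁' hr₁'
  obtain ⟨C2, hC2, H2⟩ := aux_main hN p₂ h1.sub2 f₂ h1.bd2 φ h2.2.2.1 lam μ _ hchain.1 hα1 hαp2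
    hchain.2.2.2.2 q₂ q₂' r₂' hadm2 hq₂' hr₂'
  have hp1 := h1.sub1.1
  have hp2 := h1.sub2.1
  refine ⟨C1.toReal + C2.toReal + 1, by positivity, fun v T _ hv hd => ?_⟩
  have hCe : ENNReal.ofReal (C1.toReal + C2.toReal + 1) = C1 + C2 + 1 := by
    rw [ENNReal.ofReal_add (by positivity) (by norm_num), ENNReal.ofReal_add (by positivity) (by positivity),
      ENNReal.ofReal_toReal hC1, ENNReal.ofReal_toReal hC2, ENNReal.ofReal_one]
  rw [hCe]
  set X := XNorm q₁ (ENNReal.ofReal (p₁ + 1)) q₂ (ENNReal.ofReal (p₂ + 1)) lam T v with hX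
  have x1 : wNormH2 lam T v ≤ X := by rw [hX, XNorm, add_assoc]; exact le_self_add
  have x2 : wNorm q₁ (ENNReal.ofReal (p₁ + 1)) lam T (tderiv v) ≤ X := by
    rw [hX, XNorm]; exact le_add_self.trans le_self_add
  have x3 : wNorm q₂ (ENNReal.ofReal (p₂ + 1)) lam T (tderiv v) ≤ X := by
    rw [hX, XNorm]; exact le_add_self
  by_cases hXt : X = ∞
  · rw [hXt, ENNReal.top_rpow_of_pos (by norm_num), top_add, top_add, ENNReal.mul_top (by simp)]
    exact ⟨le_top, le_top⟩
  · constructor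
    · refine (H1 v T X hv hd x1 x2 hXt).trans ?_
      gcongr
      rw [add_assoc]; exact le_self_add
    · refine (H2 v T X hv hd x1 x3 hXt).trans ?_
      gcongr
      exact le_add_self.trans le_self_add

end
end
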